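/- Let N_T = ⌈β T^α⌉ with 1/3 < α ≤ 1 and β > 0, and suppose E[ϖ(Y₁, U^T_{1,1})⁸] < ∞. Then, as T → ∞, the recentred and rescaled loglikelihood error satisfies the conditional central limit theorem T^{(α−1)/2} Z_T + (1/2) T^{(1−α)/2} β^{−1} γ² | 𝒴^T ⇒ N(0, β^{−1} γ²); that is, for every bounded continuous f : ℝ → ℝ, the conditional expectation E[ f( T^{(α−1)/2} Z_T + (1/2) T^{(1−α)/2} β^{−1} γ² ) | 𝒴^T ] converges in probability to ∫ f dN(0, β^{−1} γ²). -/

import Mathlib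

/-!
The conditional central limit theorem is reduced to an unconditional one for *two copies*. Keep the
observations `y` and draw two independent noise arrays `u`, `u'`, giving two rescaled, recentred
errors `M(y, u)` and `M(y, u')`. If their joint law converges to `L ⊗ L` with `L = N(0, β⁻¹γ²)`,
then testing it against `(f(x) - c)(f(x') - c)` with `c = ∫ f dL` gives
`E[(E[f(M) | y] - c)²] → 0`, so the conditional expectation converges in `L²` and hence in
probability (`tendsto_two_copies`; `condExp_ae_eq_integral_of_prod` identifies the conditional
expectation with integration over `u`).

By Lévy's theorem the joint law is controlled through characteristic functions. Given `y` the sites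
`t` are independent, and the `y t` are themselves i.i.d., so the joint characteristic function at
`(s, s')` is exactly `(∫ ψ_s ψ_s' dμ) ^ T`, where `ψ_s y` is the characteristic function of a single
site (`sitePsi`, `integral_exp_sites`). It remains to show
`T (∫ ψ_s ψ_s' dμ - 1) → -(s² + s'²) β⁻¹γ² / 2`.

One site contributes `a log (1 + d) + b`, where `a = T ^ ((α - 1) / 2)`, `d` is an average of `N_T`
centred i.i.d. variables and `b` is the `T`-th part of the recentring. The Taylor expansion
`norm_cexp_log_expand` uses third order in `d` for the logarithm; it holds for *every* `d`, because
the modulus of the exponential is one and the region `|d| > 1/2` (where the logarithm may be very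
negative, or take its junk value at `0`) is paid for by `d ^ 6`. Inserting the moments of `d` up to
order six (`mean_moments`) yields the one-site expansion `site_expand`, whose error `siteErr` is
linear in `1 + E[(ϖ - 1)⁸ | y]`. This is integrable in `y`, which gives `pair_expand`. Finally
`T · siteErr → 0` because its dominant terms are `T ^ ((1 - 3α) / 2)` and `T ^ (-α / 2)`; rounding
`β T ^ α` up to an integer moves the drift by `O(T ^ ((1 - 3α) / 2))`, while the rest of the drift
cancels against the recentring (`scaling_asymptotics`).
-/

open MeasureTheory ProbabilityTheory Filter
open scoped ENNReal

/-- The law of a standard Gaussian random vector in `ℝ^p`. -/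
noncomputable def stdGaussianPi (p : ℕ) : Measure (Fin p → ℝ) :=
  Measure.pi fun _ => gaussianReal 0 1

/-! ### Taylor expansions -/

/-- Third-order Taylor bound for `x ↦ exp (i x)`, valid on the whole real line. -/
lemma norm_cexp_taylor_two (x : ℝ) :
    ‖Complex.exp (x * Complex.I) - (1 + (x : ℂ) * Complex.I - (x : ℂ) ^ 2 / 2)‖ ≤ 4 * |x| ^ 3 := by
  rcases le_or_gt |x| 1 with h | h
  · have hx : ‖(x : ℂ) * Complex.I‖ ≤ 1 := by simpa using h
    have := Complex.exp_bound hx (n := 3) (by norm_num)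
    simp only [Finset.sum_range_succ, Finset.sum_range_zero, norm_mul, Complex.norm_real,
      Complex.norm_I, mul_one, Real.norm_eq_abs, Nat.factorial] at this
    have e : ((x : ℂ) * Complex.I) ^ 2 = - (x : ℂ) ^ 2 := by
      rw [mul_pow, Complex.I_sq]; ring
    rw [e] at this
    refine le_trans (le_of_eq ?_) (this.trans ?_)
    · congr 1; push_cast; ring
    · have : 0 ≤ |x| ^ 3 := by positivity
      norm_num; linarith
  · have h1 : ‖Complex.exp (x * Complex.I)‖ = 1 := Complex.norm_exp_ofReal_mul_I x
    have h2 : ‖(x : ℂ) * Complex.I‖ = |x| := by simp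
    have h3 : ‖(x : ℂ) ^ 2 / 2‖ = |x| ^ 2 / 2 := by simp
    have h4 := norm_sub_le (Complex.exp (x * Complex.I))
      (1 + (x : ℂ) * Complex.I - (x : ℂ) ^ 2 / 2)
    have h5 := norm_sub_le (1 + (x : ℂ) * Complex.I) ((x : ℂ) ^ 2 / 2)
    have h6 := norm_add_le (1 : ℂ) ((x : ℂ) * Complex.I)
    rw [norm_one] at h6
    have h7 : 1 ≤ |x| ^ 3 := one_le_pow₀ h.le
    have h8 : |x| ≤ |x| ^ 3 := le_self_pow₀ h.le (by norm_num)
    have h9 : |x| ^ 2 ≤ |x| ^ 3 := pow_le_pow_right₀ h.le (by norm_num)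
    linarith

lemma abs_log_taylor {d : ℝ} (h : |d| ≤ 1 / 2) :
    |Real.log (1 + d) - (d - d ^ 2 / 2 + d ^ 3 / 3)| ≤ 2 * d ^ 4 := by
  have h1 : |-d| < 1 := by rw [abs_neg]; linarith
  have := Real.abs_log_sub_add_sum_range_le h1 3
  simp only [Finset.sum_range_succ, Finset.sum_range_zero, abs_neg] at this
  have e : |d| ^ (3 + 1) = d ^ 4 := by
    rw [show 3 + 1 = 2 * 2 from rfl, pow_mul, sq_abs]; ring
  rw [e] at this
  refine le_trans (le_of_eq ?_) (this.trans ?_)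
  · congr 1; push_cast; ring_nf
  · rw [div_le_iff₀ (by linarith)]
    nlinarith [show 0 ≤ d ^ 4 by positivity]

set_option maxHeartbeats 1000000 in
/-- Expansion of the characteristic exponential of `a log(1+d) + b`: up to an error that is
integrably small, only the terms of degree at most three in `d` (linear part) and at most two
(quadratic part) survive. It holds for all `d`, the values with `|d| > 1/2` being absorbed
by `d ^ 6`. -/
lemma norm_cexp_log_expand (s a b d : ℝ) (ha : 0 ≤ a) (ha1 : a ≤ 1) (hb : 0 ≤ b) (hb1 : b ≤ 1) :
    ‖Complex.exp ((s * (a * Real.log (1 + d) + b) : ℝ) * Complex.I)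
      - (1 + ((s * (a * (d - d ^ 2 / 2 + d ^ 3 / 3) + b) : ℝ) : ℂ) * Complex.I
        - ((s ^ 2 * (a ^ 2 * d ^ 2 + 2 * a * b * d) / 2 : ℝ) : ℂ))‖
      ≤ 1000 * (1 + |s| ^ 3) *
        (a * d ^ 4 + a ^ 2 * |d| ^ 3 + a * b * d ^ 2 + b ^ 2 + d ^ 6) := by
  have hs0 : 0 ≤ |s| := abs_nonneg s
  have hs1 : |s| ≤ 1 + |s| ^ 3 := by nlinarith [sq_nonneg (|s| - 1), mul_nonneg hs0 hs0]
  have hs2 : s ^ 2 ≤ 1 + |s| ^ 3 := by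
    rw [← sq_abs s]
    nlinarith [sq_nonneg (|s| - 1), mul_nonneg hs0 hs0, mul_nonneg hs0 (sq_nonneg (|s| - 1))]
  have hs3 : |s| ^ 3 ≤ 1 + |s| ^ 3 := by linarith
  have hs4 : 1 ≤ 1 + |s| ^ 3 := by linarith [pow_nonneg hs0 3]
  set c : ℝ := 1 + |s| ^ 3 with hc
  set L := Real.log (1 + d) with hL
  set q := d - d ^ 2 / 2 + d ^ 3 / 3 with hq
  have hu : 0 ≤ |d| := abs_nonneg d
  have hd2 : d ^ 2 = |d| ^ 2 := (sq_abs d).symm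
  have hd3 : |d ^ 3| = |d| ^ 3 := abs_pow d 3
  have hd4 : d ^ 4 = |d| ^ 4 := by
    rw [show 4 = 2 * 2 from rfl, pow_mul, pow_mul, sq_abs]
  have hd6 : d ^ 6 = |d| ^ 6 := by
    rw [show 6 = 2 * 3 from rfl, pow_mul, pow_mul, sq_abs]
  have hab : 0 ≤ a * b := mul_nonneg ha hb
  have haa : a ^ 3 ≤ a ^ 2 := pow_le_pow_of_le_one ha ha1 (by norm_num)
  have hbb : b ^ 3 ≤ b ^ 2 := pow_le_pow_of_le_one hb hb1 (by norm_num)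
  have ec : ∀ r : ℝ, ‖(r : ℂ)‖ = |r| := fun r => by simp
  have ecI : ∀ r : ℝ, ‖(r : ℂ) * Complex.I‖ = |r| := fun r => by simp
  set E := a * d ^ 4 + a ^ 2 * |d| ^ 3 + a * b * d ^ 2 + b ^ 2 + d ^ 6 with hE
  have g1 : 0 ≤ a * d ^ 4 := by positivity
  have g2 : 0 ≤ a ^ 2 * |d| ^ 3 := by positivity
  have g3 : 0 ≤ a * b * d ^ 2 := by positivity
  have g4 : 0 ≤ b ^ 2 := by positivity
  have g5 : 0 ≤ d ^ 6 := by positivity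
  have hE0 : 0 ≤ E := by linarith
  rcases le_or_gt |d| (1 / 2) with h | h
  · have hLq : |L - q| ≤ 2 * d ^ 4 := abs_log_taylor h
    have p3 : |d| ^ 3 ≤ |d| ^ 2 / 2 := by nlinarith [pow_nonneg hu 2]
    have p4 : |d| ^ 4 ≤ |d| ^ 2 / 4 := by nlinarith [pow_nonneg hu 2, pow_nonneg hu 3]
    have p2 : |d| ^ 2 ≤ |d| / 2 := by nlinarith
    have hLd : |L - d| ≤ 2 * d ^ 2 := by
      have : L - d = (L - q) + (-(d ^ 2 / 2)) + d ^ 3 / 3 := by rw [hq]; ring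
      rw [this]
      refine (abs_add_three _ _ _).trans ?_
      rw [abs_neg, abs_div, abs_div, abs_of_nonneg (sq_nonneg d), hd3, abs_two,
        abs_of_pos (show (0 : ℝ) < 3 by norm_num)]
      rw [hd4] at hLq
      rw [hd2]; linarith [pow_nonneg hu 2]
    have hL2 : |L| ≤ 2 * |d| := by
      have : L = (L - d) + d := by ring
      rw [this]; refine (abs_add_le _ _).trans ?_
      rw [hd2] at hLd; linarith
    set x := a * L + b with hx
    have hxa : |x| ≤ 2 * (a * |d|) + b := by
      refine (abs_add_le _ _).trans ?_
      rw [abs_mul, abs_of_nonneg ha, abs_of_nonneg hb]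
      linarith [mul_le_mul_of_nonneg_left hL2 ha]
    have hx3 : |x| ^ 3 ≤ 32 * (a ^ 2 * |d| ^ 3) + 4 * b ^ 2 := by
      have hX : 0 ≤ 2 * (a * |d|) := by positivity
      calc |x| ^ 3 ≤ (2 * (a * |d|) + b) ^ 3 := pow_le_pow_left₀ (abs_nonneg _) hxa 3
        _ ≤ 4 * ((2 * (a * |d|)) ^ 3 + b ^ 3) := by
            nlinarith [mul_nonneg (add_nonneg hX hb) (sq_nonneg (2 * (a * |d|) - b))]
        _ = 32 * (a ^ 3 * |d| ^ 3) + 4 * b ^ 3 := by ring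
        _ ≤ _ := by
            have := mul_le_mul_of_nonneg_right haa (pow_nonneg hu 3)
            linarith
    have T1 := norm_cexp_taylor_two (s * x)
    rw [abs_mul, mul_pow] at T1
    have e : Complex.exp ((s * x : ℝ) * Complex.I)
        - (1 + ((s * (a * q + b) : ℝ) : ℂ) * Complex.I
          - ((s ^ 2 * (a ^ 2 * d ^ 2 + 2 * a * b * d) / 2 : ℝ) : ℂ))
        = (Complex.exp ((s * x : ℝ) * Complex.I)
            - (1 + ((s * x : ℝ) : ℂ) * Complex.I - ((s * x : ℝ) : ℂ) ^ 2 / 2))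
          + ((s * (a * (L - q)) : ℝ) : ℂ) * Complex.I
          + ((-(s ^ 2 * (a ^ 2 * ((L - d) * (L + d)) + 2 * (a * b) * (L - d) + b ^ 2) / 2) : ℝ)
            : ℂ) := by
      rw [hx]; push_cast; ring
    rw [e]
    refine (norm_add₃_le).trans ?_
    rw [ec, ecI, abs_neg]
    have t2 : |s * (a * (L - q))| ≤ c * (2 * (a * d ^ 4)) := by
      rw [abs_mul, abs_mul, abs_of_nonneg ha]
      refine mul_le_mul hs1 ?_ (by positivity) (by linarith)
      linarith [mul_le_mul_of_nonneg_left hLq ha]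
    have t3 : |s ^ 2 * (a ^ 2 * ((L - d) * (L + d)) + 2 * (a * b) * (L - d) + b ^ 2) / 2|
        ≤ c * (6 * (a ^ 2 * |d| ^ 3) + 4 * (a * b * d ^ 2) + b ^ 2) := by
      rw [mul_div_assoc, abs_mul, abs_of_nonneg (sq_nonneg s)]
      refine mul_le_mul hs2 ?_ (abs_nonneg _) (by linarith)
      rw [abs_div, abs_two]
      have k1 : |a ^ 2 * ((L - d) * (L + d))| ≤ 6 * (a ^ 2 * |d| ^ 3) := by
        rw [abs_mul, abs_mul, abs_of_nonneg (sq_nonneg a)]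
        have : |L + d| ≤ 3 * |d| := (abs_add_le _ _).trans (by linarith)
        have := mul_le_mul hLd this (abs_nonneg _) (by positivity)
        rw [hd2] at this
        calc _ ≤ a ^ 2 * (2 * |d| ^ 2 * (3 * |d|)) := mul_le_mul_of_nonneg_left this (sq_nonneg a)
          _ = _ := by ring
      have k2 : |2 * (a * b) * (L - d)| ≤ 4 * (a * b * d ^ 2) := by
        rw [abs_mul, abs_of_nonneg (by positivity : 0 ≤ 2 * (a * b))]
        linarith [mul_le_mul_of_nonneg_left hLd hab]
      have k3 : |b ^ 2| = b ^ 2 := abs_of_nonneg g4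
      have := abs_add_three (a ^ 2 * ((L - d) * (L + d))) (2 * (a * b) * (L - d)) (b ^ 2)
      linarith
    have t1 : 4 * (|s| ^ 3 * |x| ^ 3) ≤ 4 * (c * (32 * (a ^ 2 * |d| ^ 3) + 4 * b ^ 2)) := by
      have := mul_le_mul hs3 hx3 (by positivity) (by linarith)
      linarith
    have : c * (4 * (32 * (a ^ 2 * |d| ^ 3) + 4 * b ^ 2) + 2 * (a * d ^ 4)
        + (6 * (a ^ 2 * |d| ^ 3) + 4 * (a * b * d ^ 2) + b ^ 2)) ≤ c * (1000 * E) :=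
      mul_le_mul_of_nonneg_left (by linarith) (by linarith)
    linarith
  -- For `|d| > 1/2` nothing is known about the logarithm: every term is bounded separately.
  · have p1 : 1 ≤ 64 * d ^ 6 := by
      have := pow_le_pow_left₀ (by norm_num) h.le 6
      rw [hd6]; norm_num at this ⊢; linarith
    have w1 : |d| ≤ 2 * |d| ^ 2 := by nlinarith
    have w2 : |d| ^ 2 ≤ 2 * |d| ^ 3 := by nlinarith [pow_nonneg hu 2]
    have w3 : |d| ^ 3 ≤ 2 * |d| ^ 4 := by nlinarith [pow_nonneg hu 3]
    have hq4 : |q| ≤ 11 * d ^ 4 := by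
      have : q = d + (-(d ^ 2 / 2)) + d ^ 3 / 3 := by rw [hq]; ring
      rw [this]
      refine (abs_add_three _ _ _).trans ?_
      rw [abs_neg, abs_div, abs_div, abs_of_nonneg (sq_nonneg d), hd3, abs_two,
        abs_of_pos (show (0 : ℝ) < 3 by norm_num), hd4, hd2]
      linarith
    have h1 : ‖Complex.exp ((s * (a * L + b) : ℝ) * Complex.I)‖ = 1 :=
      Complex.norm_exp_ofReal_mul_I _
    refine (norm_sub_le _ _).trans ?_
    refine (add_le_add le_rfl ((norm_sub_le _ _).trans
      (add_le_add (norm_add_le _ _) le_rfl))).trans ?_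
    rw [h1, norm_one, ec, ecI]
    have t2 : |s * (a * q + b)| ≤ c * (11 * (a * d ^ 4) + 64 * d ^ 6) := by
      rw [abs_mul]
      refine mul_le_mul hs1 ?_ (abs_nonneg _) (by linarith)
      refine (abs_add_le _ _).trans ?_
      rw [abs_mul, abs_of_nonneg ha, abs_of_nonneg hb]
      have := mul_le_mul hb1 p1 zero_le_one zero_le_one
      linarith [mul_le_mul_of_nonneg_left hq4 ha]
    have t3 : |s ^ 2 * (a ^ 2 * d ^ 2 + 2 * a * b * d) / 2|
        ≤ c * (2 * (a ^ 2 * |d| ^ 3) + 4 * (a * b * d ^ 2)) := by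
      rw [mul_div_assoc, abs_mul, abs_of_nonneg (sq_nonneg s)]
      refine mul_le_mul hs2 ?_ (abs_nonneg _) (by linarith)
      rw [abs_div, abs_two]
      have k1 : |a ^ 2 * d ^ 2| ≤ 2 * (a ^ 2 * |d| ^ 3) := by
        rw [abs_of_nonneg (by positivity), hd2]
        linarith [mul_le_mul_of_nonneg_left w2 (sq_nonneg a)]
      have k2 : |2 * a * b * d| ≤ 4 * (a * b * d ^ 2) := by
        rw [abs_mul, abs_of_nonneg (by positivity : 0 ≤ 2 * a * b), hd2]
        linarith [mul_le_mul_of_nonneg_left w1 hab]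
      have := abs_add_le (a ^ 2 * d ^ 2) (2 * a * b * d)
      linarith [abs_nonneg (a ^ 2 * d ^ 2), abs_nonneg (2 * a * b * d)]
    have : c * (128 * d ^ 6 + (11 * (a * d ^ 4) + 64 * d ^ 6)
        + (2 * (a ^ 2 * |d| ^ 3) + 4 * (a * b * d ^ 2))) ≤ c * (1000 * E) :=
      mul_le_mul_of_nonneg_left (by linarith) (by linarith)
    have := mul_le_mul hs4 (le_refl (128 * d ^ 6)) (by positivity) (by linarith)
    linarith

/-! ### Moments of sums and averages of independent variables -/

lemma MeasureTheory.MemLp.integrable_pow_le_eight {Ω : Type*} [MeasurableSpace Ω] {P : Measure Ω}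
    [IsProbabilityMeasure P] {f : Ω → ℝ} (hf : MemLp f 8 P) {k : ℕ} (hk : k ≤ 8) :
    Integrable (fun ω => f ω ^ k) P := by
  have h1 : MemLp f k P := hf.mono_exponent (by exact_mod_cast hk)
  have h2 := h1.integrable_norm_pow'
  refine h2.mono (hf.1.pow k) (ae_of_all _ fun ω => ?_)
  simp

lemma sq_integral_le {Ω : Type*} [MeasurableSpace Ω] {P : Measure Ω} [IsProbabilityMeasure P]
    {f : Ω → ℝ} (hf : Integrable f P) (hf2 : Integrable (fun ω => f ω ^ 2) P) :
    (∫ ω, f ω ∂P) ^ 2 ≤ ∫ ω, f ω ^ 2 ∂P := by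
  set c := ∫ ω, f ω ∂P with hc
  have h : 0 ≤ ∫ ω, (f ω - c) ^ 2 ∂P := integral_nonneg fun ω => sq_nonneg _
  have e : ∀ ω, (f ω - c) ^ 2 = f ω ^ 2 - (2 * c * f ω - c ^ 2) := fun ω => by ring
  simp_rw [e] at h
  have hi : Integrable (fun ω => 2 * c * f ω - c ^ 2) P := (hf.const_mul _).sub (integrable_const _)
  rw [integral_sub hf2 hi, integral_sub (hf.const_mul _) (integrable_const _), integral_const_mul, ← hc] at h
  simp at h
  nlinarith

/-- Moments up to order six of a sum of independent centred variables with common moments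
`m k`: the bounds have the orders predicted by the central limit theorem. -/
lemma sum_moments {ι Ω : Type*} [MeasurableSpace Ω] {P : Measure Ω} [IsProbabilityMeasure P]
    {X : ι → Ω → ℝ} (hX : ∀ i, Measurable (X i)) (hind : iIndepFun X P)
    (hL : ∀ i, MemLp (X i) 8 P) (m : ℕ → ℝ) (hm : ∀ i k, k ≤ 8 → ∫ ω, X i ω ^ k ∂P = m k)
    (h1 : m 1 = 0) {K : ℝ} (h24 : m 2 ^ 2 ≤ m 4) (h2 : 0 ≤ m 2) (h4 : 0 ≤ m 4)
    (h42 : m 4 * m 2 ≤ K) (h33 : m 3 ^ 2 ≤ K) (h6 : m 6 ≤ K) (s : Finset ι) :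
    MemLp (∑ i ∈ s, X i) 8 P ∧ ∫ ω, (∑ i ∈ s, X i) ω ∂P = 0 ∧
    ∫ ω, (∑ i ∈ s, X i) ω ^ 2 ∂P = s.card * m 2 ∧
    ∫ ω, (∑ i ∈ s, X i) ω ^ 3 ∂P = s.card * m 3 ∧
    ∫ ω, (∑ i ∈ s, X i) ω ^ 4 ∂P ≤ 3 * s.card ^ 2 * m 4 ∧
    ∫ ω, (∑ i ∈ s, X i) ω ^ 6 ∂P ≤ 15 * s.card ^ 3 * K := by
  classical
  induction s using Finset.induction_on with
  | empty => simp
  | insert i s hi ih =>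
    obtain ⟨L, e1, e2, e3, e4, e6⟩ := ih
    have hI : IndepFun (∑ j ∈ s, X j) (X i) P := hind.indepFun_finsetSum_of_notMem hX hi
    rw [Finset.sum_insert hi, Finset.card_insert_of_notMem hi]
    set S : Ω → ℝ := ∑ j ∈ s, X j with hS
    have hIp : ∀ j k : ℕ, IndepFun (fun ω => S ω ^ j) (fun ω => X i ω ^ k) P := fun j k =>
      hI.comp (φ := fun x => x ^ j) (ψ := fun x => x ^ k) (by fun_prop) (by fun_prop)
    have iS : ∀ j, j ≤ 8 → Integrable (fun ω => S ω ^ j) P := fun j hj =>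
      L.integrable_pow_le_eight hj
    have iX : ∀ k, k ≤ 8 → Integrable (fun ω => X i ω ^ k) P := fun k hk =>
      (hL i).integrable_pow_le_eight hk
    have iM : ∀ j k, j ≤ 8 → k ≤ 8 → Integrable (fun ω => S ω ^ j * X i ω ^ k) P :=
      fun j k hj hk => (hIp j k).integrable_mul (iS j hj) (iX k hk)
    have vM : ∀ j k, j ≤ 8 → k ≤ 8 →
        ∫ ω, S ω ^ j * X i ω ^ k ∂P = (∫ ω, S ω ^ j ∂P) * m k := fun j k hj hk => by
      rw [(hIp j k).integral_fun_mul_eq_mul_integral (iS j hj).1 (iX k hk).1, hm i k hk]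
    have bin : ∀ n, n ≤ 8 → ∫ ω, (X i + S) ω ^ n ∂P
        = ∑ k ∈ Finset.range (n + 1), (∫ ω, S ω ^ k ∂P) * m (n - k) * n.choose k := by
      intro n hn
      have : ∀ ω, (X i + S) ω ^ n
          = ∑ k ∈ Finset.range (n + 1), S ω ^ k * X i ω ^ (n - k) * n.choose k := fun ω => by
        rw [Pi.add_apply, add_comm, add_pow]
      simp_rw [this]
      rw [integral_finsetSum]
      · refine Finset.sum_congr rfl fun k hk => ?_
        rw [integral_mul_const, vM k (n - k) (by simp at hk; omega) (by omega)]
      · intro k hk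
        exact (iM k (n - k) (by simp at hk; omega) (by omega)).mul_const _
    have m0 : m 0 = 1 := by rw [← hm i 0 (by norm_num)]; simp
    have s0 : ∫ ω, S ω ^ 0 ∂P = 1 := by simp
    have s1 : ∫ ω, S ω ^ 1 ∂P = 0 := by simpa using e1
    have n0 : (0 : ℝ) ≤ s.card := Nat.cast_nonneg _
    refine ⟨(hL i).add L, ?_⟩
    generalize X i + S = W at bin ⊢
    have b1 := bin 1 (by norm_num)
    have b2 := bin 2 (by norm_num)
    have b3 := bin 3 (by norm_num)
    have b4 := bin 4 (by norm_num)
    have b6 := bin 6 (by norm_num)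
    simp only [Finset.sum_range_succ, Finset.sum_range_zero, s0, e2, e3, h1, m0, Nat.choose,
      pow_one] at b1 b2 b3 b4 b6
    norm_num [e1] at b1 b2 b3 b4 b6
    refine ⟨b1, ?_, ?_, ?_, ?_⟩
    · rw [b2]; push_cast; ring
    · rw [b3]; push_cast; ring
    · rw [b4]; push_cast
      nlinarith
    · rw [b6]; push_cast
      have := mul_le_mul_of_nonneg_right e4 h2
      have k1 := mul_le_mul_of_nonneg_left h42 n0
      have k2 := mul_le_mul_of_nonneg_left h42 (pow_nonneg n0 2)
      have k3 := mul_le_mul_of_nonneg_left h33 n0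
      have kK : 0 ≤ K := (mul_nonneg h4 h2).trans h42
      have k4 := mul_nonneg n0 kK
      nlinarith

lemma memLp_eight_of_integrable_pow {Ω : Type*} [MeasurableSpace Ω] {P : Measure Ω} {f : Ω → ℝ}
    (hf : Measurable f) (h : Integrable (fun ω => f ω ^ 8) P) : MemLp f 8 P := by
  rw [← integrable_norm_rpow_iff hf.aestronglyMeasurable (by norm_num) (by norm_num)]
  refine h.congr (ae_of_all _ fun ω => ?_)
  have : (8 : ℝ≥0∞).toReal = ((8 : ℕ) : ℝ) := by norm_num
  simp only [this, Real.rpow_natCast, Real.norm_eq_abs]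
  exact ((show Even 8 by decide).pow_abs (f ω)).symm

/-- Moments of the average of `n` i.i.d. centred variables `g (u i)`. -/
lemma mean_moments {E : Type*} [MeasurableSpace E] (ν : Measure E) [IsProbabilityMeasure ν]
    (g : E → ℝ) (hg : Measurable g) (hint : Integrable (fun x => g x ^ 8) ν)
    (h0 : ∫ x, g x ∂ν = 0) (n : ℕ) (hn : 0 < n) (d : (Fin n → E) → ℝ)
    (hd : ∀ u, d u = (n : ℝ)⁻¹ * ∑ i, g (u i)) (K v : ℝ) (hK : K = 1 + ∫ x, g x ^ 8 ∂ν)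
    (hv : v = ∫ x, g x ^ 2 ∂ν) :
    v ≤ K ∧ v ^ 2 ≤ K ∧ MemLp d 8 (Measure.pi fun _ : Fin n => ν) ∧
    ∫ u, d u ∂(Measure.pi fun _ : Fin n => ν) = 0 ∧
    ∫ u, d u ^ 2 ∂(Measure.pi fun _ : Fin n => ν) = v / n ∧
    |∫ u, d u ^ 3 ∂(Measure.pi fun _ : Fin n => ν)| ≤ K / n ^ 2 ∧
    ∫ u, d u ^ 4 ∂(Measure.pi fun _ : Fin n => ν) ≤ 3 * K / n ^ 2 ∧
    ∫ u, d u ^ 6 ∂(Measure.pi fun _ : Fin n => ν) ≤ 15 * K / n ^ 3 ∧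
    ∫ u, |d u| ^ 3 ∂(Measure.pi fun _ : Fin n => ν) ≤ 2 * K / (n * √n) := by
  have hL : MemLp g 8 ν := memLp_eight_of_integrable_pow hg hint
  have ig : ∀ k, k ≤ 8 → Integrable (fun x => g x ^ k) ν := fun k hk =>
    hL.integrable_pow_le_eight hk
  set m : ℕ → ℝ := fun k => ∫ x, g x ^ k ∂ν with hm
  have sqm : ∀ k, k ≤ 4 → m k ^ 2 ≤ m (k * 2) := fun k hk => by
    have := sq_integral_le (ig k (by omega)) (by simpa [← pow_mul] using ig (k * 2) (by omega))
    simpa [← pow_mul] using this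
  have hmK : ∀ k, k ≤ 8 → m k ≤ K := fun k hk => by
    have : ∀ x, g x ^ k ≤ 1 + g x ^ 8 := fun x => by
      have e8 : g x ^ 8 = |g x| ^ 8 := ((show Even 8 by decide).pow_abs (g x)).symm
      have : g x ^ k ≤ |g x| ^ k := (le_abs_self _).trans (abs_pow _ _).le
      rw [e8]
      rcases le_total |g x| 1 with h | h
      · linarith [pow_le_one₀ (abs_nonneg (g x)) h (n := k), pow_nonneg (abs_nonneg (g x)) 8]
      · linarith [pow_le_pow_right₀ h hk]
    have := integral_mono (ig k hk) ((integrable_const (1 : ℝ)).add (ig 8 le_rfl)) this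
    simp only [Pi.add_apply] at this
    rw [integral_add (integrable_const _) (ig 8 le_rfl)] at this
    simpa [hK, hm] using this
  have h2 : 0 ≤ m 2 := integral_nonneg fun x => by positivity
  have h4 : 0 ≤ m 4 := integral_nonneg fun x => by positivity
  have q2 : m 2 ^ 2 ≤ m 4 := sqm 2 (by norm_num)
  have q3 : m 3 ^ 2 ≤ m 6 := sqm 3 (by norm_num)
  have q4 : m 4 ^ 2 ≤ m 8 := sqm 4 (by norm_num)
  have k2 := hmK 2 (by norm_num)
  have k4 := hmK 4 (by norm_num)
  have k6 := hmK 6 (by norm_num)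
  have k8 := hmK 8 (by norm_num)
  have K1 : 1 ≤ K := by
    have : 0 ≤ ∫ x, g x ^ 8 ∂ν := integral_nonneg fun x => by positivity
    linarith
  have hvm : v = m 2 := hv
  have hmp : ∀ i : Fin n, MeasurePreserving (fun u : Fin n → E => u i)
      (Measure.pi fun _ => ν) ν := fun i => measurePreserving_eval (fun _ => ν) i
  obtain ⟨L, e1, e2, e3, e4, e6⟩ := sum_moments (P := Measure.pi fun _ : Fin n => ν)
    (X := fun (i : Fin n) u => g (u i)) (fun i => hg.comp (measurable_pi_apply i))
    (iIndepFun_pi (X := fun _ => g) fun i => hg.aemeasurable)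
    (fun i => hL.comp_measurePreserving (hmp i)) m
    (fun i k hk => by
      change _ = ∫ x, g x ^ k ∂ν
      conv_rhs => rw [← (hmp i).map_eq]
      rw [integral_map (hmp i).measurable.aemeasurable (hg.pow_const k).aestronglyMeasurable])
    (by simpa [hm] using h0) (K := K) q2 h2 h4 (by nlinarith [sq_nonneg (m 4 - m 2)])
    (q3.trans k6) k6 Finset.univ
  simp only [Finset.card_univ, Fintype.card_fin] at e2 e3 e4 e6
  set S : (Fin n → E) → ℝ := ∑ i, fun u => g (u i) with hS
  have hdS : ∀ u, d u = (n : ℝ)⁻¹ * S u := fun u => by rw [hd, hS, Finset.sum_apply]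
  have hdS' : d = fun u => (n : ℝ)⁻¹ * S u := funext hdS
  have Ld : MemLp d 8 (Measure.pi fun _ : Fin n => ν) := hdS' ▸ L.const_mul _
  have hn' : (0 : ℝ) < n := by exact_mod_cast hn
  have f2 : ∫ u, d u ^ 2 ∂(Measure.pi fun _ : Fin n => ν) = v / n := by
    simp_rw [hdS, mul_pow]
    rw [integral_const_mul, e2, hvm]
    field_simp
  have f4 : ∫ u, d u ^ 4 ∂(Measure.pi fun _ : Fin n => ν) ≤ 3 * m 4 / n ^ 2 := by
    simp_rw [hdS, mul_pow]
    rw [integral_const_mul, inv_pow, inv_mul_le_iff₀ (by positivity)]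
    refine e4.trans (le_of_eq ?_)
    field_simp
  refine ⟨hvm ▸ k2, hvm ▸ q2.trans k4, Ld, ?_, f2, ?_, ?_, ?_, ?_⟩
  · simp_rw [hdS]
    rw [integral_const_mul, e1, mul_zero]
  · simp_rw [hdS, mul_pow]
    rw [integral_const_mul, e3, inv_pow]
    have : ((n : ℝ) ^ 3)⁻¹ * (n * m 3) = m 3 / n ^ 2 := by field_simp
    rw [this, abs_div, abs_of_pos (pow_pos hn' 2)]
    refine div_le_div_of_nonneg_right ?_ (by positivity)
    refine abs_le.2 ⟨?_, ?_⟩ <;> nlinarith [sq_nonneg (m 3 - 1), sq_nonneg (m 3 + 1)]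
  · refine f4.trans (div_le_div_of_nonneg_right (by linarith) (by positivity))
  · simp_rw [hdS, mul_pow]
    rw [integral_const_mul, inv_pow, inv_mul_le_iff₀ (by positivity)]
    refine e6.trans (le_of_eq ?_)
    field_simp
  · set r := √(n : ℝ) with hr
    have hr0 : 0 < r := Real.sqrt_pos.2 hn'
    have hrn : r ^ 2 = n := Real.sq_sqrt hn'.le
    -- weighted AM-GM between the second and the fourth moment
    have pw : ∀ u, |d u| ^ 3 ≤ (1 / 2) * (r⁻¹ * d u ^ 2 + r * d u ^ 4) := fun u => by
      have e4' : d u ^ 4 = |d u| ^ 4 := ((show Even 4 by decide).pow_abs (d u)).symm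
      rw [e4', ← sq_abs (d u)]
      have : (1 / 2) * (r⁻¹ * |d u| ^ 2 + r * |d u| ^ 4) - |d u| ^ 3
          = (1 / 2) * r⁻¹ * (|d u| * (1 - r * |d u|)) ^ 2 := by field_simp; ring
      have h' : 0 ≤ (1 / 2) * r⁻¹ * (|d u| * (1 - r * |d u|)) ^ 2 := by positivity
      linarith
    have i2 := Ld.integrable_pow_le_eight (k := 2) (by norm_num)
    have i4 := Ld.integrable_pow_le_eight (k := 4) (by norm_num)
    have i3 : Integrable (fun u => |d u| ^ 3) (Measure.pi fun _ : Fin n => ν) := by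
      simpa [abs_pow] using (Ld.integrable_pow_le_eight (k := 3) (by norm_num)).abs
    have := integral_mono i3 (((i2.const_mul r⁻¹).add (i4.const_mul r)).const_mul (1 / 2)) pw
    refine this.trans ?_
    rw [integral_const_mul]
    simp only [Pi.add_apply]
    rw [integral_add (i2.const_mul _) (i4.const_mul _), integral_const_mul, integral_const_mul, f2]
    have b4 := mul_le_mul_of_nonneg_left f4 hr0.le
    have c1 : r⁻¹ * (v / n) ≤ K / (n * r) := by
      rw [show r⁻¹ * (v / n) = v / (n * r) by field_simp]
      exact div_le_div_of_nonneg_right (hvm ▸ k2) (by positivity)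
    have c2 : r * (3 * m 4 / n ^ 2) ≤ 3 * K / (n * r) := by
      rw [show r * (3 * m 4 / n ^ 2) = 3 * m 4 / (n * r) by rw [← hrn]; field_simp]
      exact div_le_div_of_nonneg_right (by linarith) (by positivity)
    have c3 : 2 * K / (n * r) = (1 / 2) * (K / (n * r) + 3 * K / (n * r)) := by ring
    rw [c3]
    linarith

/-! ### Expansion of the one-site characteristic function -/

/-- Error size in the expansion of the one-site characteristic function: the orders of the five
error terms of `norm_cexp_log_expand` and of the third moment of an average of `n` variables, with
the dependence on the law of the variables left out. -/
noncomputable def siteErr (a b : ℝ) (n : ℕ) : ℝ :=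
  a / n ^ 2 + a ^ 2 / (n * √n) + a * b / n + b ^ 2 + 1 / n ^ 3

/-- Leading term of (one-site characteristic function − 1) at `s`, made of the drift
`b - a v / (2n)` and the variance `a² v / n`. -/
noncomputable def siteMain (s a b v : ℝ) (n : ℕ) : ℂ :=
  ((s * (b - a * v / (2 * n)) : ℝ) : ℂ) * Complex.I - ((s ^ 2 * a ^ 2 * v / (2 * n) : ℝ) : ℂ)

lemma siteErr_nonneg {a b : ℝ} (ha : 0 ≤ a) (hb : 0 ≤ b) (n : ℕ) : 0 ≤ siteErr a b n := by
  unfold siteErr; positivity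

/-- Expansion of the characteristic function at `s` of `a log (1 + d) + b`, where `d` is the
average of `n` i.i.d. centred variables of variance `v`. -/
lemma site_expand {E : Type*} [MeasurableSpace E] (ν : Measure E) [IsProbabilityMeasure ν]
    (g : E → ℝ) (hg : Measurable g) (hint : Integrable (fun x => g x ^ 8) ν)
    (h0 : ∫ x, g x ∂ν = 0) (n : ℕ) (hn : 0 < n) (d : (Fin n → E) → ℝ) (hdm : Measurable d)
    (hd : ∀ u, d u = (n : ℝ)⁻¹ * ∑ i, g (u i)) (K v : ℝ) (hK : K = 1 + ∫ x, g x ^ 8 ∂ν)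
    (hv : v = ∫ x, g x ^ 2 ∂ν) (s a b : ℝ) (ha : 0 ≤ a) (ha1 : a ≤ 1) (hb : 0 ≤ b) (hb1 : b ≤ 1) :
    ‖(∫ u, Complex.exp ((s * (a * Real.log (1 + d u) + b) : ℝ) * Complex.I)
        ∂(Measure.pi fun _ : Fin n => ν)) - (1 + siteMain s a b v n)‖
      ≤ 20000 * (1 + |s| ^ 3) * K * siteErr a b n := by
  obtain ⟨-, -, Ld, f1, f2, f3, f4, f6, f3'⟩ :=
    mean_moments ν g hg hint h0 n hn d hd K v hK hv
  have hn' : (0 : ℝ) < n := by exact_mod_cast hn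
  have K1 : 1 ≤ K := by
    have : 0 ≤ ∫ x, g x ^ 8 ∂ν := integral_nonneg fun x => by positivity
    linarith
  set π := Measure.pi fun _ : Fin n => ν with hπ
  have i1 : Integrable d π := by simpa using Ld.integrable_pow_le_eight (k := 1) (by norm_num)
  have i2 := Ld.integrable_pow_le_eight (k := 2) (by norm_num)
  have i3 := Ld.integrable_pow_le_eight (k := 3) (by norm_num)
  have i4 := Ld.integrable_pow_le_eight (k := 4) (by norm_num)
  have i6 := Ld.integrable_pow_le_eight (k := 6) (by norm_num)
  have i3' : Integrable (fun u => |d u| ^ 3) π := by simpa [abs_pow] using i3.abs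
  set R1 : (Fin n → E) → ℝ := fun u => s * (a * (d u - d u ^ 2 / 2 + d u ^ 3 / 3) + b) with hR1
  set R2 : (Fin n → E) → ℝ := fun u => s ^ 2 * (a ^ 2 * d u ^ 2 + 2 * a * b * d u) / 2 with hR2
  have iq : Integrable (fun u => d u - d u ^ 2 / 2 + d u ^ 3 / 3) π :=
    (i1.sub (i2.div_const 2)).add (i3.div_const 3)
  have iq' : Integrable (fun u => d u - d u ^ 2 / 2) π := i1.sub (i2.div_const 2)
  have iR1 : Integrable R1 π := ((iq.const_mul a).add (integrable_const b)).const_mul s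
  have iR2 : Integrable R2 π :=
    (((i2.const_mul (a ^ 2)).add (i1.const_mul (2 * a * b))).const_mul (s ^ 2)).div_const 2
  have vq : ∫ u, (d u - d u ^ 2 / 2 + d u ^ 3 / 3) ∂π
      = - (v / n) / 2 + (∫ u, d u ^ 3 ∂π) / 3 := by
    rw [integral_add iq' (i3.div_const 3), integral_sub i1 (i2.div_const 2),
      integral_div, integral_div, f1, f2]
    ring
  have vR1 : ∫ u, R1 u ∂π = s * (a * (- (v / n) / 2 + (∫ u, d u ^ 3 ∂π) / 3) + b) := by
    rw [hR1, integral_const_mul, integral_add (iq.const_mul a) (integrable_const b),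
      integral_const_mul, vq]
    simp
  have vR2 : ∫ u, R2 u ∂π = s ^ 2 * (a ^ 2 * (v / n)) / 2 := by
    rw [hR2, integral_div, integral_const_mul,
      integral_add (i2.const_mul (a ^ 2)) (i1.const_mul (2 * a * b)), integral_const_mul,
      integral_const_mul, f1, f2]
    ring
  set F : (Fin n → E) → ℂ := fun u =>
    Complex.exp ((s * (a * Real.log (1 + d u) + b) : ℝ) * Complex.I) with hF
  have iF : Integrable F π := by
    refine Integrable.of_bound (C := 1) ?_ (ae_of_all _ fun u => ?_)
    · refine Measurable.aestronglyMeasurable ?_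
      fun_prop
    · rw [hF]; exact (Complex.norm_exp_ofReal_mul_I _).le
  have iR1c : Integrable (fun u => (R1 u : ℂ) * Complex.I) π := iR1.ofReal.mul_const _
  have iR2c : Integrable (fun u => (R2 u : ℂ)) π := iR2.ofReal
  have i1c : Integrable (fun _ : Fin n → E => (1 : ℂ)) π := integrable_const _
  have iA : Integrable (fun u => 1 + (R1 u : ℂ) * Complex.I) π := i1c.add iR1c
  have iG : Integrable (fun u => 1 + (R1 u : ℂ) * Complex.I - (R2 u : ℂ)) π := iA.sub iR2c
  have vG : ∫ u, (1 + (R1 u : ℂ) * Complex.I - (R2 u : ℂ)) ∂π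
      = (1 + siteMain s a b v n)
        + ((s * (a * ((∫ u, d u ^ 3 ∂π) / 3)) : ℝ) : ℂ) * Complex.I := by
    rw [integral_sub iA iR2c, integral_add i1c iR1c, integral_mul_const,
      integral_complex_ofReal, integral_complex_ofReal, vR1, vR2, siteMain]
    simp only [integral_const, probReal_univ, one_smul]
    push_cast
    have : (n : ℂ) ≠ 0 := by exact_mod_cast hn.ne'
    field_simp
    ring
  have e : (∫ u, F u ∂π) - (1 + siteMain s a b v n)
      = (∫ u, (F u - (1 + (R1 u : ℂ) * Complex.I - (R2 u : ℂ))) ∂π)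
        + ((s * (a * ((∫ u, d u ^ 3 ∂π) / 3)) : ℝ) : ℂ) * Complex.I := by
    rw [integral_sub iF iG, vG]; ring
  rw [e]
  have hs0 : 0 ≤ |s| := abs_nonneg s
  have hs1 : |s| ≤ 1 + |s| ^ 3 := by nlinarith [sq_nonneg (|s| - 1), mul_nonneg hs0 hs0]
  set c : ℝ := 1 + |s| ^ 3 with hc
  have hc0 : 0 ≤ c := hs0.trans hs1
  have t2 : ‖((s * (a * ((∫ u, d u ^ 3 ∂π) / 3)) : ℝ) : ℂ) * Complex.I‖
      ≤ c * (K * (a / n ^ 2)) := by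
    rw [norm_mul, Complex.norm_I, mul_one, Complex.norm_real, Real.norm_eq_abs, abs_mul, abs_mul,
      abs_of_nonneg ha, abs_div, abs_of_pos (show (0 : ℝ) < 3 by norm_num)]
    refine mul_le_mul hs1 ?_ (by positivity) hc0
    have := mul_le_mul_of_nonneg_left f3 ha
    have h3 : 0 ≤ a * |∫ u, d u ^ 3 ∂π| := by positivity
    calc _ = a * |∫ u, d u ^ 3 ∂π| / 3 := by ring
      _ ≤ a * (K / n ^ 2) := by linarith
      _ = _ := by ring
  have j1 := i4.const_mul a
  have j2 := i3'.const_mul (a ^ 2)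
  have j3 := i2.const_mul (a * b)
  have j12 : Integrable (fun u => a * d u ^ 4 + a ^ 2 * |d u| ^ 3) π := j1.add j2
  have j123 : Integrable (fun u => a * d u ^ 4 + a ^ 2 * |d u| ^ 3 + a * b * d u ^ 2) π :=
    j12.add j3
  have j1234 : Integrable
      (fun u => a * d u ^ 4 + a ^ 2 * |d u| ^ 3 + a * b * d u ^ 2 + b ^ 2) π :=
    j123.add (integrable_const _)
  have jE : Integrable
      (fun u => a * d u ^ 4 + a ^ 2 * |d u| ^ 3 + a * b * d u ^ 2 + b ^ 2 + d u ^ 6) π :=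
    j1234.add i6
  have vE : ∫ u, (a * d u ^ 4 + a ^ 2 * |d u| ^ 3 + a * b * d u ^ 2 + b ^ 2 + d u ^ 6) ∂π
      = a * (∫ u, d u ^ 4 ∂π) + a ^ 2 * (∫ u, |d u| ^ 3 ∂π) + a * b * (v / n) + b ^ 2
        + ∫ u, d u ^ 6 ∂π := by
    rw [integral_add j1234 i6, integral_add j123 (integrable_const _), integral_add j12 j3,
      integral_add j1 j2, integral_const_mul, integral_const_mul, integral_const_mul, f2]
    simp
  have hvK : v ≤ K := (mean_moments ν g hg hint h0 n hn d hd K v hK hv).1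
  have bE : ∫ u, (a * d u ^ 4 + a ^ 2 * |d u| ^ 3 + a * b * d u ^ 2 + b ^ 2 + d u ^ 6) ∂π
      ≤ 15 * K * siteErr a b n := by
    rw [vE, siteErr]
    have u1 := mul_le_mul_of_nonneg_left f4 ha
    have u2 := mul_le_mul_of_nonneg_left f3' (sq_nonneg a)
    have u3 : a * b * (v / n) ≤ a * b * (K / n) :=
      mul_le_mul_of_nonneg_left (div_le_div_of_nonneg_right hvK hn'.le) (mul_nonneg ha hb)
    have u4 : b ^ 2 ≤ K * b ^ 2 := by nlinarith [sq_nonneg b]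
    have K0 : 0 ≤ K := by linarith
    have z1 : 0 ≤ K * (a / n ^ 2) := by positivity
    have z2 : 0 ≤ K * (a ^ 2 / (n * √n)) := by positivity
    have z3 : 0 ≤ K * (a * b / n) := by positivity
    have z4 : 0 ≤ K * b ^ 2 := by positivity
    have w1 : a * (3 * K / n ^ 2) = 3 * (K * (a / n ^ 2)) := by ring
    have w2 : a ^ 2 * (2 * K / (n * √n)) = 2 * (K * (a ^ 2 / (n * √n))) := by ring
    have w3 : a * b * (K / n) = K * (a * b / n) := by ring
    have w6 : 15 * K / n ^ 3 = 15 * (K * (1 / n ^ 3)) := by ring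
    rw [w1] at u1
    rw [w2] at u2
    rw [w3] at u3
    rw [w6] at f6
    linarith
  have t1 : ‖∫ u, (F u - (1 + (R1 u : ℂ) * Complex.I - (R2 u : ℂ))) ∂π‖
      ≤ 1000 * c * (15 * K * siteErr a b n) := by
    refine (norm_integral_le_integral_norm _).trans ?_
    refine (integral_mono (iF.sub iG).norm (jE.const_mul (1000 * c)) fun u =>
      norm_cexp_log_expand s a b (d u) ha ha1 hb hb1).trans ?_
    rw [integral_const_mul]
    exact mul_le_mul_of_nonneg_left bE (by positivity)
  have t3 : a / n ^ 2 ≤ siteErr a b n := by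
    unfold siteErr
    have : 0 ≤ a ^ 2 / (n * √n) + a * b / n + b ^ 2 + 1 / n ^ 3 := by positivity
    linarith
  have t4 : c * (K * (a / n ^ 2)) ≤ c * (K * siteErr a b n) :=
    mul_le_mul_of_nonneg_left (mul_le_mul_of_nonneg_left t3 (by linarith)) hc0
  have t5 : 0 ≤ c * (K * siteErr a b n) :=
    mul_nonneg hc0 (mul_nonneg (by linarith) (siteErr_nonneg ha hb n))
  refine (norm_add_le _ _).trans ?_
  linarith

/-! ### Two conditionally independent copies at one site -/

lemma norm_mul_sub_le {z w A B : ℂ} (hw : ‖w‖ ≤ 1) :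
    ‖z * w - (1 + (A + B))‖
      ≤ ‖z - (1 + A)‖ + 2 * ‖w - (1 + B)‖ + 3 * ‖A‖ ^ 2 + ‖B‖ ^ 2 := by
  -- `‖A‖ ‖w - 1‖` is treated apart, as `‖A‖` may exceed one.
  have e : z * w - (1 + (A + B)) = (z - (1 + A)) * w + (w - (1 + B)) + A * (w - 1) := by ring
  rw [e]
  refine norm_add₃_le.trans ?_
  rw [norm_mul, norm_mul]
  have h1 : ‖z - (1 + A)‖ * ‖w‖ ≤ ‖z - (1 + A)‖ := mul_le_of_le_one_right (norm_nonneg _) hw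
  have hA := norm_nonneg A
  have hB := norm_nonneg B
  have hW := norm_nonneg (w - (1 + B))
  have h2 : ‖A‖ * ‖w - 1‖ ≤ ‖w - (1 + B)‖ + 3 * ‖A‖ ^ 2 + ‖B‖ ^ 2 := by
    rcases le_or_gt ‖A‖ 1 with h | h
    · have : ‖w - 1‖ ≤ ‖w - (1 + B)‖ + ‖B‖ := by
        have : w - 1 = (w - (1 + B)) + B := by ring
        rw [this]; exact norm_add_le _ _
      calc _ ≤ ‖A‖ * (‖w - (1 + B)‖ + ‖B‖) := mul_le_mul_of_nonneg_left this hA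
        _ ≤ _ := by nlinarith [sq_nonneg (‖A‖ - ‖B‖), mul_le_mul_of_nonneg_right h hW]
    · have : ‖w - 1‖ ≤ 2 := (norm_sub_le _ _).trans (by rw [norm_one]; linarith)
      nlinarith [sq_nonneg ‖B‖]
  linarith

/-- The square of the leading term is itself of the size of the error, so that products of leading
terms are negligible. -/
lemma norm_siteMain_sq_le {s a b v K : ℝ} {n : ℕ} (ha : 0 ≤ a) (ha1 : a ≤ 1)
    (hb : 0 ≤ b) (hv : 0 ≤ v) (hK : 1 ≤ K) (hvK : v ^ 2 ≤ K) :
    ‖siteMain s a b v n‖ ^ 2 ≤ 2 * (1 + |s| ^ 3) ^ 2 * K * siteErr a b n := by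
  have hs0 : 0 ≤ |s| := abs_nonneg s
  have hs1 : |s| ≤ 1 + |s| ^ 3 := by nlinarith [sq_nonneg (|s| - 1), mul_nonneg hs0 hs0]
  have hs2 : s ^ 2 ≤ 1 + |s| ^ 3 := by
    rw [← sq_abs s]
    nlinarith [sq_nonneg (|s| - 1), mul_nonneg hs0 hs0, mul_nonneg hs0 (sq_nonneg (|s| - 1))]
  set c : ℝ := 1 + |s| ^ 3 with hc
  have hc0 : 0 ≤ c := hs0.trans hs1
  set r : ℝ := a * v / n with hr
  have hr0 : 0 ≤ r := by positivity
  have h1 : ‖siteMain s a b v n‖ ≤ c * (b + r) := by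
    unfold siteMain
    refine (norm_sub_le _ _).trans ?_
    rw [norm_mul, Complex.norm_I, mul_one, Complex.norm_real, Complex.norm_real,
      Real.norm_eq_abs, Real.norm_eq_abs, abs_mul]
    have k1 : |b - a * v / (2 * n)| ≤ b + r / 2 := by
      rw [show a * v / (2 * n) = r / 2 by rw [hr]; ring]
      exact (abs_sub _ _).trans (by rw [abs_of_nonneg hb, abs_of_nonneg (by linarith)])
    have k2 : |s ^ 2 * a ^ 2 * v / (2 * n)| ≤ c * (r / 2) := by
      rw [abs_of_nonneg (by positivity)]
      calc s ^ 2 * a ^ 2 * v / (2 * n) = s ^ 2 * (a * (r / 2)) := by rw [hr]; ring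
        _ ≤ c * (1 * (r / 2)) := by gcongr
        _ = _ := by ring
    have k3 := mul_le_mul hs1 k1 (abs_nonneg _) hc0
    linarith
  have h2 : ‖siteMain s a b v n‖ ^ 2 ≤ (c * (b + r)) ^ 2 :=
    pow_le_pow_left₀ (norm_nonneg _) h1 2
  have h3 : (b + r) ^ 2 ≤ 2 * (b ^ 2 + r ^ 2) := by nlinarith [sq_nonneg (b - r)]
  have h4 : r ^ 2 ≤ K * (a / n ^ 2) := by
    rw [hr, div_pow, mul_pow, mul_div_assoc']
    refine div_le_div_of_nonneg_right ?_ (by positivity)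
    have : a ^ 2 ≤ a := by nlinarith
    calc a ^ 2 * v ^ 2 ≤ a * K := mul_le_mul this hvK (sq_nonneg _) ha
      _ = _ := by ring
  have h5 : b ^ 2 ≤ K * b ^ 2 := by nlinarith [sq_nonneg b]
  have h6 : b ^ 2 + a / n ^ 2 ≤ siteErr a b n := by
    unfold siteErr
    have : 0 ≤ a ^ 2 / (n * √n) + a * b / n + 1 / n ^ 3 := by positivity
    linarith
  have h7 : b ^ 2 + r ^ 2 ≤ K * siteErr a b n := by nlinarith
  calc _ ≤ c ^ 2 * (b + r) ^ 2 := by rw [← mul_pow]; exact h2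
    _ ≤ c ^ 2 * (2 * (K * siteErr a b n)) :=
        mul_le_mul_of_nonneg_left (by linarith) (sq_nonneg _)
    _ = _ := by ring

/-- Characteristic function at `s` of `a log Ŵ + b` given `Y = y`, where `Ŵ` is the average of
`n` independent weights `w y (u i)`. -/
noncomputable def sitePsi {𝓨 E : Type*} [MeasurableSpace E] (ν : Measure E) (w : 𝓨 → E → ℝ)
    (n : ℕ) (a b s : ℝ) (y : 𝓨) : ℂ :=
  ∫ u, Complex.exp ((s * (a * Real.log ((n : ℝ)⁻¹ * ∑ i, w y (u i)) + b) : ℝ) * Complex.I)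
    ∂(Measure.pi fun _ : Fin n => ν)

lemma norm_sitePsi_le {𝓨 E : Type*} [MeasurableSpace E] (ν : Measure E) [IsProbabilityMeasure ν]
    (w : 𝓨 → E → ℝ) (n : ℕ) (a b s : ℝ) (y : 𝓨) : ‖sitePsi ν w n a b s y‖ ≤ 1 := by
  unfold sitePsi
  refine (norm_integral_le_integral_norm _).trans (le_of_eq ?_)
  simp_rw [Complex.norm_exp_ofReal_mul_I]
  simp

lemma stronglyMeasurable_sitePsi {𝓨 E : Type*} [MeasurableSpace 𝓨] [MeasurableSpace E]
    (ν : Measure E) [IsProbabilityMeasure ν] (w : 𝓨 → E → ℝ)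
    (hw : Measurable (Function.uncurry w)) (n : ℕ) (a b s : ℝ) :
    StronglyMeasurable (sitePsi ν w n a b s) := by
  unfold sitePsi
  refine StronglyMeasurable.integral_prod_right
    (f := fun y (u : Fin n → E) => Complex.exp
      ((s * (a * Real.log ((n : ℝ)⁻¹ * ∑ i, w y (u i)) + b) : ℝ) * Complex.I)) ?_
  have : ∀ i : Fin n, Measurable (fun p : 𝓨 × (Fin n → E) => w p.1 (p.2 i)) := fun i =>
    hw.comp (measurable_fst.prodMk ((measurable_pi_apply i).comp measurable_snd))
  refine Measurable.stronglyMeasurable ?_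
  unfold Function.uncurry
  fun_prop

/-- Joint expansion for two conditionally independent copies: the product of the two conditional
characteristic functions, averaged over `y`. The leading term is linear in the conditional variance
of the weight, so averaging replaces that variance by its mean. -/
lemma pair_expand {𝓨 E : Type*} [MeasurableSpace 𝓨] [MeasurableSpace E] (μ : Measure 𝓨)
    [IsProbabilityMeasure μ] (ν : Measure E) [IsProbabilityMeasure ν] (w : 𝓨 → E → ℝ)
    (hw : Measurable (Function.uncurry w)) (hmean : ∀ᵐ y ∂μ, ∫ x, w y x ∂ν = 1)
    (hmom : Integrable (fun p : 𝓨 × E => w p.1 p.2 ^ 8) (μ.prod ν)) :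
    ∃ K : ℝ, 0 ≤ K ∧ ∀ (n : ℕ) (_ : 0 < n) (a b s s' : ℝ) (_ : 0 ≤ a) (_ : a ≤ 1) (_ : 0 ≤ b)
      (_ : b ≤ 1),
      ‖(∫ y, sitePsi ν w n a b s y * sitePsi ν w n a b s' y ∂μ)
        - (1 + (siteMain s a b (∫ p : 𝓨 × E, (w p.1 p.2 - 1) ^ 2 ∂(μ.prod ν)) n
          + siteMain s' a b (∫ p : 𝓨 × E, (w p.1 p.2 - 1) ^ 2 ∂(μ.prod ν)) n))‖
      ≤ 100000 * (1 + |s| ^ 3 + |s'| ^ 3) ^ 2 * K * siteErr a b n := by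
  have Lw : MemLp (fun p : 𝓨 × E => w p.1 p.2) 8 (μ.prod ν) :=
    memLp_eight_of_integrable_pow hw hmom
  have Lg : MemLp (fun p : 𝓨 × E => w p.1 p.2 - 1) 8 (μ.prod ν) := Lw.sub (memLp_const 1)
  have i8 := Lg.integrable_pow_le_eight (k := 8) le_rfl
  have i2 := Lg.integrable_pow_le_eight (k := 2) (by norm_num)
  have i1 := Lg.integrable_pow_le_eight (k := 1) (by norm_num)
  set v : 𝓨 → ℝ := fun y => ∫ x, (w y x - 1) ^ 2 ∂ν with hv
  set κ : 𝓨 → ℝ := fun y => 1 + ∫ x, (w y x - 1) ^ 8 ∂ν with hκ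
  have iv : Integrable v μ := i2.integral_prod_left
  have iκ : Integrable κ μ := (integrable_const 1).add i8.integral_prod_left
  have hv0 : ∀ y, 0 ≤ v y := fun y => integral_nonneg fun x => by positivity
  have hκ1 : ∀ y, 1 ≤ κ y := fun y => by
    have : 0 ≤ ∫ x, (w y x - 1) ^ 8 ∂ν := integral_nonneg fun x => by positivity
    simp only [hκ]; linarith
  refine ⟨∫ y, κ y ∂μ, integral_nonneg fun y => zero_le_one.trans (hκ1 y), ?_⟩
  intro n hn a b s s' ha ha1 hb hb1
  rw [integral_prod _ i2]
  change ‖_ - (1 + (siteMain s a b (∫ y, v y ∂μ) n + siteMain s' a b (∫ y, v y ∂μ) n))‖ ≤ _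
  have hn' : (n : ℝ) ≠ 0 := by exact_mod_cast hn.ne'
  -- `siteMain` is affine in the variance.
  have eM : ∀ t y, siteMain t a b (v y) n = ((t * b : ℝ) : ℂ) * Complex.I
      + (v y : ℂ) * (siteMain t a b 1 n - siteMain t a b 0 n) := fun t y => by
    unfold siteMain; push_cast; ring
  have iM : ∀ t, Integrable (fun y => siteMain t a b (v y) n) μ := fun t => by
    simp_rw [eM t]
    exact (integrable_const _).add (iv.ofReal.mul_const _)
  have vM : ∀ t, ∫ y, siteMain t a b (v y) n ∂μ = siteMain t a b (∫ y, v y ∂μ) n := fun t => by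
    rw [integral_congr_ae (ae_of_all μ (eM t)), integral_add (integrable_const _) (iv.ofReal.mul_const _), integral_const,
      integral_mul_const, integral_complex_ofReal]
    unfold siteMain
    simp only [probReal_univ, one_smul]
    push_cast; ring
  have iψ : Integrable (fun y => sitePsi ν w n a b s y * sitePsi ν w n a b s' y) μ := by
    refine Integrable.of_bound (C := 1) ((stronglyMeasurable_sitePsi ν w hw n a b s).mul
      (stronglyMeasurable_sitePsi ν w hw n a b s')).aestronglyMeasurable
      (ae_of_all _ fun y => ?_)
    rw [norm_mul]
    exact mul_le_one₀ (norm_sitePsi_le _ _ _ _ _ _ _) (norm_nonneg _)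
      (norm_sitePsi_le _ _ _ _ _ _ _)
  have i1c : Integrable (fun _ : 𝓨 => (1 : ℂ)) μ := integrable_const _
  have iMM : Integrable (fun y => siteMain s a b (v y) n + siteMain s' a b (v y) n) μ :=
    (iM s).add (iM s')
  have iR : Integrable (fun y => 1 + (siteMain s a b (v y) n + siteMain s' a b (v y) n)) μ :=
    i1c.add iMM
  have e : (∫ y, sitePsi ν w n a b s y * sitePsi ν w n a b s' y ∂μ)
        - (1 + (siteMain s a b (∫ y, v y ∂μ) n + siteMain s' a b (∫ y, v y ∂μ) n))
      = ∫ y, (sitePsi ν w n a b s y * sitePsi ν w n a b s' y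
          - (1 + (siteMain s a b (v y) n + siteMain s' a b (v y) n))) ∂μ := by
    rw [integral_sub iψ iR, integral_add i1c iMM, integral_add (iM s) (iM s'), vM, vM]
    simp
  rw [e]
  have hs3 : 0 ≤ |s| ^ 3 := by positivity
  have hs3' : 0 ≤ |s'| ^ 3 := by positivity
  have he := siteErr_nonneg ha hb n
  have key : ∀ᵐ y ∂μ, ‖sitePsi ν w n a b s y * sitePsi ν w n a b s' y
        - (1 + (siteMain s a b (v y) n + siteMain s' a b (v y) n))‖
      ≤ 100000 * (1 + |s| ^ 3 + |s'| ^ 3) ^ 2 * siteErr a b n * κ y := by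
    filter_upwards [hmean, i8.prod_right_ae, i1.prod_right_ae] with y h1 h8 h11
    have hgm : Measurable (fun x => w y x - 1) := (hw.comp measurable_prodMk_left).sub_const 1
    have h11' : Integrable (fun x => w y x - 1) ν := by simpa using h11
    have h0 : ∫ x, (w y x - 1) ∂ν = 0 := by
      have hwi : Integrable (fun x => w y x) ν := by
        exact (h11'.add (integrable_const 1)).congr (ae_of_all _ fun x => by simp)
      rw [integral_sub hwi (integrable_const _), h1]; simp
    set d : (Fin n → E) → ℝ := fun u => (n : ℝ)⁻¹ * ∑ i, (w y (u i) - 1) with hd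
    have hdm : Measurable d := by
      have : ∀ i : Fin n, Measurable (fun u : Fin n → E => w y (u i) - 1) := fun i =>
        hgm.comp (measurable_pi_apply i)
      rw [hd]; fun_prop
    have hψ : ∀ t, sitePsi ν w n a b t y
        = ∫ u, Complex.exp ((t * (a * Real.log (1 + d u) + b) : ℝ) * Complex.I)
          ∂(Measure.pi fun _ : Fin n => ν) := fun t => by
      unfold sitePsi
      congr 1; ext u
      congr 5
      simp only [hd, Finset.sum_sub_distrib, Finset.sum_const, Finset.card_univ,
        Fintype.card_fin, nsmul_eq_mul, mul_one]
      congr 1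
      field_simp
      ring_nf
    have S := fun t => site_expand ν (fun x => w y x - 1) hgm h8 h0 n hn d hdm (fun u => rfl)
      (κ y) (v y) rfl rfl t a b ha ha1 hb hb1
    have hvκ : v y ^ 2 ≤ κ y :=
      (mean_moments ν (fun x => w y x - 1) hgm h8 h0 n hn d (fun u => rfl) (κ y) (v y) rfl rfl).2.1
    have Q := fun t => norm_siteMain_sq_le (s := t) (n := n) ha ha1 hb (hv0 y) (hκ1 y) hvκ
    have S1 := S s
    have S2 := S s'
    rw [← hψ] at S1 S2
    refine (norm_mul_sub_le (norm_sitePsi_le _ _ _ _ _ _ _)).trans ?_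
    set c := 1 + |s| ^ 3 + |s'| ^ 3 with hc
    set X := κ y * siteErr a b n with hX
    have hX0 : 0 ≤ X := mul_nonneg (by linarith [hκ1 y]) he
    have c1 : 1 ≤ c := by linarith
    have cc : c ≤ c ^ 2 := by nlinarith
    have l1 : (1 + |s| ^ 3) ≤ c ^ 2 := by linarith
    have l2 : (1 + |s'| ^ 3) ≤ c ^ 2 := by linarith
    have l3 : (1 + |s| ^ 3) ^ 2 ≤ c ^ 2 := pow_le_pow_left₀ (by linarith) (by linarith) 2
    have l4 : (1 + |s'| ^ 3) ^ 2 ≤ c ^ 2 := pow_le_pow_left₀ (by linarith) (by linarith) 2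
    have m1 := mul_le_mul_of_nonneg_right l1 hX0
    have m2 := mul_le_mul_of_nonneg_right l2 hX0
    have m3 := mul_le_mul_of_nonneg_right l3 hX0
    have m4 := mul_le_mul_of_nonneg_right l4 hX0
    have m5 : 0 ≤ c ^ 2 * X := by positivity
    have r1 : 20000 * (1 + |s| ^ 3) * κ y * siteErr a b n = 20000 * ((1 + |s| ^ 3) * X) := by
      rw [hX]; ring
    have r2 : 20000 * (1 + |s'| ^ 3) * κ y * siteErr a b n = 20000 * ((1 + |s'| ^ 3) * X) := by
      rw [hX]; ring
    have r3 : 2 * (1 + |s| ^ 3) ^ 2 * κ y * siteErr a b n = 2 * ((1 + |s| ^ 3) ^ 2 * X) := by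
      rw [hX]; ring
    have r4 : 2 * (1 + |s'| ^ 3) ^ 2 * κ y * siteErr a b n = 2 * ((1 + |s'| ^ 3) ^ 2 * X) := by
      rw [hX]; ring
    have r5 : 100000 * c ^ 2 * siteErr a b n * κ y = 100000 * (c ^ 2 * X) := by rw [hX]; ring
    have Q1 := Q s
    have Q2 := Q s'
    rw [r3] at Q1
    rw [r4] at Q2
    rw [r1] at S1
    rw [r2] at S2
    rw [r5]
    linarith
  refine (norm_integral_le_integral_norm _).trans ?_
  refine (integral_mono_ae (iψ.sub iR).norm (iκ.const_mul _) key).trans (le_of_eq ?_)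
  rw [integral_const_mul]; ring

/-! ### Asymptotics of many sites -/

/-- Convergence of the characteristic function of `T` independent sites, for two conditionally
independent copies, under abstract growth conditions on the scalings. -/
lemma tendsto_pair_pow {𝓨 E : Type*} [MeasurableSpace 𝓨] [MeasurableSpace E] (μ : Measure 𝓨)
    [IsProbabilityMeasure μ] (ν : Measure E) [IsProbabilityMeasure ν] (w : 𝓨 → E → ℝ)
    (hw : Measurable (Function.uncurry w)) (hmean : ∀ᵐ y ∂μ, ∫ x, w y x ∂ν = 1)
    (hmom : Integrable (fun p : 𝓨 × E => w p.1 p.2 ^ 8) (μ.prod ν)) (n : ℕ → ℕ) (a b : ℕ → ℝ)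
    (g v : ℝ) (hg : g = ∫ p : 𝓨 × E, (w p.1 p.2 - 1) ^ 2 ∂(μ.prod ν))
    (hab : ∀ᶠ T in atTop, 0 < n T ∧ 0 ≤ a T ∧ a T ≤ 1 ∧ 0 ≤ b T ∧ b T ≤ 1)
    (herr : Tendsto (fun T : ℕ => (T : ℝ) * siteErr (a T) (b T) (n T)) atTop (nhds 0))
    (hdrift : Tendsto (fun T : ℕ => (T : ℝ) * (b T - a T * g / (2 * n T))) atTop (nhds 0))
    (hvar : Tendsto (fun T : ℕ => (T : ℝ) * (a T ^ 2 * g / n T)) atTop (nhds v)) (s s' : ℝ) :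
    Tendsto (fun T : ℕ =>
      (∫ y, sitePsi ν w (n T) (a T) (b T) s y * sitePsi ν w (n T) (a T) (b T) s' y ∂μ) ^ T)
      atTop (nhds (Complex.exp ((-(s ^ 2 + s' ^ 2) * v / 2 : ℝ) : ℂ))) := by
  obtain ⟨K, hK, H⟩ := pair_expand μ ν w hw hmean hmom
  rw [← hg] at H
  have hmain : ∀ t : ℝ, Tendsto (fun T : ℕ => (T : ℂ) * siteMain t (a T) (b T) g (n T)) atTop
      (nhds ((-(t ^ 2) * v / 2 : ℝ) : ℂ)) := fun t => by
    have h1 := (Complex.continuous_ofReal.tendsto _).comp (hdrift.const_mul t)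
    have h2 := (Complex.continuous_ofReal.tendsto _).comp (hvar.const_mul (t ^ 2 / 2))
    have h3 := (h1.mul_const Complex.I).sub h2
    refine (h3.congr fun T => ?_).trans_eq ?_
    · simp only [Function.comp, siteMain]
      push_cast; ring
    · congr 1; push_cast; ring
  set R : ℕ → ℂ := fun T =>
    (∫ y, sitePsi ν w (n T) (a T) (b T) s y * sitePsi ν w (n T) (a T) (b T) s' y ∂μ)
      - (1 + (siteMain s (a T) (b T) g (n T) + siteMain s' (a T) (b T) g (n T))) with hR
  have hR0 : Tendsto (fun T : ℕ => (T : ℂ) * R T) atTop (nhds 0) := by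
    have h := herr.const_mul (100000 * (1 + |s| ^ 3 + |s'| ^ 3) ^ 2 * K)
    rw [mul_zero] at h
    refine squeeze_zero_norm' ?_ h
    filter_upwards [hab] with T ⟨h0, h1, h2, h3, h4⟩
    rw [norm_mul, Complex.norm_natCast]
    have := mul_le_mul_of_nonneg_left (H (n T) h0 (a T) (b T) s s' h1 h2 h3 h4)
      (Nat.cast_nonneg (α := ℝ) T)
    refine this.trans (le_of_eq ?_)
    ring
  have key : Tendsto (fun T : ℕ => (T : ℂ) *
      ((∫ y, sitePsi ν w (n T) (a T) (b T) s y * sitePsi ν w (n T) (a T) (b T) s' y ∂μ) - 1))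
      atTop (nhds ((-(s ^ 2 + s' ^ 2) * v / 2 : ℝ) : ℂ)) := by
    refine (((hmain s).add (hmain s')).add hR0).congr (fun T => ?_) |>.trans_eq ?_
    · simp only [hR]; ring
    · congr 1; push_cast; ring
  exact (Complex.tendsto_one_add_pow_exp_of_tendsto key).congr fun T => by
    rw [add_sub_cancel]

/-- The scalings of the theorem satisfy the growth conditions of `tendsto_pair_pow`; the condition
`1/3 < α` makes both the error and the effect of rounding `β T ^ α` up to an integer vanish. -/
lemma scaling_asymptotics {α β : ℝ} (hα : 1 / 3 < α) (hα1 : α ≤ 1) (hβ : 0 < β) (g : ℝ)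
    (hg : 0 ≤ g) (n : ℕ → ℕ) (hn : ∀ T, n T = Nat.ceil (β * (T : ℝ) ^ α)) (a b : ℕ → ℝ)
    (ha : ∀ T : ℕ, a T = (T : ℝ) ^ ((α - 1) / 2))
    (hb : ∀ T : ℕ, b T = 1 / 2 * (T : ℝ) ^ ((1 - α) / 2) * β⁻¹ * g / T) :
    (∀ᶠ T in atTop, 0 < n T ∧ 0 ≤ a T ∧ a T ≤ 1 ∧ 0 ≤ b T ∧ b T ≤ 1)
    ∧ Tendsto (fun T : ℕ => (T : ℝ) * siteErr (a T) (b T) (n T)) atTop (nhds 0)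
    ∧ Tendsto (fun T : ℕ => (T : ℝ) * (b T - a T * g / (2 * n T))) atTop (nhds 0)
    ∧ Tendsto (fun T : ℕ => (T : ℝ) * (a T ^ 2 * g / n T)) atTop (nhds (β⁻¹ * g)) := by
  have hpow : ∀ e : ℝ, e < 0 → Tendsto (fun T : ℕ => (T : ℝ) ^ e) atTop (nhds 0) := fun e he => by
    have := (tendsto_rpow_neg_atTop (neg_pos.mpr he)).comp tendsto_natCast_atTop_atTop
    simpa [Function.comp_def] using this
  have hT : ∀ᶠ T : ℕ in atTop, (1 : ℝ) ≤ T := by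
    filter_upwards [eventually_ge_atTop 1] with T h
    exact_mod_cast h
  have hb' : ∀ T : ℕ, (1 : ℝ) ≤ T → b T = β⁻¹ * g / 2 * (T : ℝ) ^ (-(1 + α) / 2) := fun T h => by
    have h0 : (0 : ℝ) < T := by linarith
    rw [hb, show -(1 + α) / 2 = (1 - α) / 2 - 1 by ring, Real.rpow_sub_one h0.ne']
    ring
  have hnl : ∀ T : ℕ, β * (T : ℝ) ^ α ≤ n T := fun T => by rw [hn]; exact Nat.le_ceil _
  have hnu : ∀ T : ℕ, (n T : ℝ) ≤ β * (T : ℝ) ^ α + 1 := fun T => by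
    rw [hn]; exact (Nat.ceil_lt_add_one (by positivity)).le
  have hnpos : ∀ T : ℕ, (1 : ℝ) ≤ T → (0 : ℝ) < n T := fun T h => by
    have h0 : (0 : ℝ) < T := by linarith
    exact lt_of_lt_of_le (by positivity) (hnl T)
  have hinv : ∀ T : ℕ, (1 : ℝ) ≤ T → (n T : ℝ)⁻¹ ≤ β⁻¹ * (T : ℝ) ^ (-α) := fun T h => by
    have h0 : (0 : ℝ) < T := by linarith
    rw [Real.rpow_neg h0.le, ← mul_inv]
    exact inv_anti₀ (by positivity) (hnl T)
  have ha0 : ∀ T, 0 ≤ a T := fun T => by rw [ha]; positivity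
  have hb0 : ∀ T, 0 ≤ b T := fun T => by rw [hb]; positivity
  refine ⟨?_, ?_, ?_, ?_⟩
  · have hblim : Tendsto b atTop (nhds 0) := by
      have h := (hpow (-(1 + α) / 2) (by linarith)).const_mul (β⁻¹ * g / 2)
      rw [mul_zero] at h
      refine h.congr' ?_
      filter_upwards [hT] with T h
      rw [hb' T h]
    filter_upwards [hT, hblim.eventually_le_const zero_lt_one] with T h h'
    refine ⟨by exact_mod_cast hnpos T h, ha0 T, ?_, hb0 T, h'⟩
    rw [ha]
    exact Real.rpow_le_one_of_one_le_of_nonpos h (by linarith)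
  · have hlim : Tendsto (fun T : ℕ => β⁻¹ ^ 2 * (T : ℝ) ^ ((1 - 3 * α) / 2)
        + β⁻¹ * √β⁻¹ * (T : ℝ) ^ (-α / 2) + β⁻¹ * (β⁻¹ * g / 2) * (T : ℝ) ^ (-α)
        + (β⁻¹ * g / 2) ^ 2 * (T : ℝ) ^ (-α) + β⁻¹ ^ 3 * (T : ℝ) ^ (1 - 3 * α)) atTop (nhds 0) := by
      have h1 := (hpow ((1 - 3 * α) / 2) (by linarith)).const_mul (β⁻¹ ^ 2)
      have h2 := (hpow (-α / 2) (by linarith)).const_mul (β⁻¹ * √β⁻¹)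
      have h3 := (hpow (-α) (by linarith)).const_mul (β⁻¹ * (β⁻¹ * g / 2))
      have h4 := (hpow (-α) (by linarith)).const_mul ((β⁻¹ * g / 2) ^ 2)
      have h5 := (hpow (1 - 3 * α) (by linarith)).const_mul (β⁻¹ ^ 3)
      simpa using (((h1.add h2).add h3).add h4).add h5
    refine squeeze_zero' (Eventually.of_forall fun T =>
      mul_nonneg (Nat.cast_nonneg T) (siteErr_nonneg (ha0 T) (hb0 T) _)) ?_ hlim
    filter_upwards [hT] with T h
    have h0 : (0 : ℝ) < T := by linarith
    have hr := hinv T h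
    have hr0 : (0 : ℝ) ≤ (n T : ℝ)⁻¹ := by positivity
    have hsq : √(n T : ℝ)⁻¹ ≤ √β⁻¹ * (T : ℝ) ^ (-α / 2) := by
      refine (Real.sqrt_le_sqrt hr).trans (le_of_eq ?_)
      rw [Real.sqrt_mul (by positivity), Real.sqrt_eq_rpow ((T : ℝ) ^ (-α)), ← Real.rpow_mul h0.le]
      congr 2; ring
    rw [hb' T h, ha]
    generalize hrr : (n T : ℝ)⁻¹ = r at *
    have e1 : siteErr ((T : ℝ) ^ ((α - 1) / 2)) (β⁻¹ * g / 2 * (T : ℝ) ^ (-(1 + α) / 2)) (n T)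
        = (T : ℝ) ^ ((α - 1) / 2) * r ^ 2 + ((T : ℝ) ^ ((α - 1) / 2)) ^ 2 * (r * √r)
          + (T : ℝ) ^ ((α - 1) / 2) * (β⁻¹ * g / 2 * (T : ℝ) ^ (-(1 + α) / 2)) * r
          + (β⁻¹ * g / 2 * (T : ℝ) ^ (-(1 + α) / 2)) ^ 2 + r ^ 3 := by
      unfold siteErr
      rw [← hrr, Real.sqrt_inv]
      simp only [div_eq_mul_inv, mul_inv, inv_pow, one_mul]
    rw [e1]
    have e2 : (T : ℝ) * ((T : ℝ) ^ ((α - 1) / 2) * r ^ 2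
          + ((T : ℝ) ^ ((α - 1) / 2)) ^ 2 * (r * √r)
          + (T : ℝ) ^ ((α - 1) / 2) * (β⁻¹ * g / 2 * (T : ℝ) ^ (-(1 + α) / 2)) * r
          + (β⁻¹ * g / 2 * (T : ℝ) ^ (-(1 + α) / 2)) ^ 2 + r ^ 3)
        ≤ (T : ℝ) * ((T : ℝ) ^ ((α - 1) / 2) * (β⁻¹ * (T : ℝ) ^ (-α)) ^ 2
          + ((T : ℝ) ^ ((α - 1) / 2)) ^ 2
            * ((β⁻¹ * (T : ℝ) ^ (-α)) * (√β⁻¹ * (T : ℝ) ^ (-α / 2)))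
          + (T : ℝ) ^ ((α - 1) / 2) * (β⁻¹ * g / 2 * (T : ℝ) ^ (-(1 + α) / 2))
            * (β⁻¹ * (T : ℝ) ^ (-α))
          + (β⁻¹ * g / 2 * (T : ℝ) ^ (-(1 + α) / 2)) ^ 2 + (β⁻¹ * (T : ℝ) ^ (-α)) ^ 3) := by
      gcongr
    refine e2.trans (le_of_eq ?_)
    have k1 : (T : ℝ) ^ ((1 - 3 * α) / 2)
        = T * (T : ℝ) ^ ((α - 1) / 2) * ((T : ℝ) ^ (-α)) ^ 2 := by
      rw [← Real.rpow_mul_natCast h0.le, ← Real.rpow_one_add' h0.le (by linarith),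
        ← Real.rpow_add h0]
      congr 1; push_cast; ring
    have k0 : (T : ℝ) * ((T : ℝ) ^ ((α - 1) / 2)) ^ 2 * (T : ℝ) ^ (-α) = 1 := by
      rw [← Real.rpow_mul_natCast h0.le]
      nth_rewrite 1 [← Real.rpow_one (T : ℝ)]
      rw [← Real.rpow_add h0, ← Real.rpow_add h0, ← Real.rpow_zero (T : ℝ)]
      congr 1; push_cast; ring
    have k3 : (T : ℝ) * (T : ℝ) ^ ((α - 1) / 2) * (T : ℝ) ^ (-(1 + α) / 2) = 1 := by
      nth_rewrite 1 [← Real.rpow_one (T : ℝ)]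
      rw [← Real.rpow_add h0, ← Real.rpow_add h0, ← Real.rpow_zero (T : ℝ)]
      congr 1; ring
    have k4 : (T : ℝ) * ((T : ℝ) ^ (-(1 + α) / 2)) ^ 2 = (T : ℝ) ^ (-α) := by
      rw [← Real.rpow_mul_natCast h0.le]
      nth_rewrite 1 [← Real.rpow_one (T : ℝ)]
      rw [← Real.rpow_add h0]
      congr 1; push_cast; ring
    have k5 : (T : ℝ) ^ (1 - 3 * α) = T * ((T : ℝ) ^ (-α)) ^ 3 := by
      rw [← Real.rpow_mul_natCast h0.le]
      nth_rewrite 2 [← Real.rpow_one (T : ℝ)]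
      rw [← Real.rpow_add h0]
      congr 1; push_cast; ring
    rw [k1, k5]
    linear_combination (β⁻¹ * √β⁻¹ * (T : ℝ) ^ (-α / 2)) * k0
      + (β⁻¹ * g / 2 * β⁻¹ * (T : ℝ) ^ (-α)) * k3 + (β⁻¹ * g / 2) ^ 2 * k4
  · have hlim := (hpow ((1 - 3 * α) / 2) (by linarith)).const_mul (g / 2 * β⁻¹ ^ 2)
    rw [mul_zero] at hlim
    refine squeeze_zero_norm' ?_ hlim
    filter_upwards [hT] with T h
    have h0 : (0 : ℝ) < T := by linarith
    have hr := hinv T h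
    have hx : (0 : ℝ) < (T : ℝ) ^ α := by positivity
    have hnp := hnpos T h
    have hnl' := hnl T
    have hnu' := hnu T
    have e1 : (T : ℝ) * (b T - a T * g / (2 * n T))
        = g / 2 * (T * a T) * (β⁻¹ * (T : ℝ) ^ (-α) - (n T : ℝ)⁻¹) := by
      have : (T : ℝ) ^ (-(1 + α) / 2) = a T * (T : ℝ) ^ (-α) := by
        rw [ha, ← Real.rpow_add h0]; congr 1; ring
      rw [hb' T h, this]
      field_simp
    have e2 : β⁻¹ * (T : ℝ) ^ (-α) - (n T : ℝ)⁻¹ ≤ (β⁻¹ * (T : ℝ) ^ (-α)) ^ 2 := by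
      rw [Real.rpow_neg h0.le, ← mul_inv]
      set z := β * (T : ℝ) ^ α with hz
      have hz0 : 0 < z := by positivity
      rw [inv_sub_inv hz0.ne' hnp.ne', inv_pow, ← one_div, div_le_div_iff₀ (by positivity)
        (by positivity)]
      nlinarith [mul_nonneg hz0.le (sub_nonneg.2 hnl'), mul_le_mul_of_nonneg_right
        (sub_le_iff_le_add'.2 hnu') (sq_nonneg z)]
    rw [e1, Real.norm_of_nonneg (mul_nonneg (mul_nonneg (by positivity)
      (mul_nonneg h0.le (ha0 T))) (sub_nonneg.2 hr))]
    calc _ ≤ g / 2 * (T * a T) * (β⁻¹ * (T : ℝ) ^ (-α)) ^ 2 :=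
          mul_le_mul_of_nonneg_left e2 (mul_nonneg (by positivity) (mul_nonneg h0.le (ha0 T)))
      _ = _ := by
        have k1 : (T : ℝ) ^ ((1 - 3 * α) / 2)
            = T * (T : ℝ) ^ ((α - 1) / 2) * ((T : ℝ) ^ (-α)) ^ 2 := by
          rw [← Real.rpow_mul_natCast h0.le, ← Real.rpow_one_add' h0.le (by linarith),
            ← Real.rpow_add h0]
          congr 1; push_cast; ring
        rw [k1, ha]; ring
  · have h1 : Tendsto (fun T : ℕ => (T : ℝ) ^ α) atTop atTop :=
      (tendsto_rpow_atTop (by linarith)).comp tendsto_natCast_atTop_atTop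
    have h2 := (((tendsto_nat_ceil_mul_div_atTop hβ.le).comp h1).inv₀ hβ.ne').mul_const g
    refine h2.congr' ?_
    filter_upwards [hT] with T h
    have h0 : (0 : ℝ) < T := by linarith
    have k : (T : ℝ) * a T ^ 2 = (T : ℝ) ^ α := by
      rw [ha, ← Real.rpow_mul_natCast h0.le]
      nth_rewrite 1 [← Real.rpow_one (T : ℝ)]
      rw [← Real.rpow_add h0]
      congr 1; push_cast; ring
    simp only [Function.comp, ← hn, inv_div]
    rw [← k]; ring

/-! ### From two copies to conditional convergence -/

/-- **Two-copies criterion.** Let `M T` be a random variable driven by an environment `y ∼ m T` and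
an independent noise `u ∼ ρ T`. If the joint law of `(M(y, u), M(y, u'))`, with the same environment
and two independent noises, converges to `L ⊗ L` in the sense of characteristic functions, then the
conditional expectation of `f (M T)` given the environment converges to `∫ f dL` in `L²`. -/
lemma tendsto_two_copies {A B : ℕ → Type*} [∀ T, MeasurableSpace (A T)]
    [∀ T, MeasurableSpace (B T)] (m : ∀ T, Measure (A T)) [∀ T, IsProbabilityMeasure (m T)]
    (ρ : ∀ T, Measure (B T)) [∀ T, IsProbabilityMeasure (ρ T)] (M : ∀ T, A T → B T → ℝ)
    (hM : ∀ T, Measurable (Function.uncurry (M T))) (L : Measure ℝ) [IsProbabilityMeasure L]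
    (h : ∀ s s' : ℝ, Tendsto (fun T => ∫ y,
        (∫ u, Complex.exp ((s * M T y u : ℝ) * Complex.I) ∂(ρ T))
          * (∫ u, Complex.exp ((s' * M T y u : ℝ) * Complex.I) ∂(ρ T)) ∂(m T))
      atTop (nhds (charFun L s * charFun L s')))
    (f : BoundedContinuousFunction ℝ ℝ) :
    Tendsto (fun T => ∫ y, ((∫ u, f (M T y u) ∂(ρ T)) - ∫ x, f x ∂L) ^ 2 ∂(m T))
      atTop (nhds 0) := by
  set pr : ∀ T, A T × (B T × B T) → WithLp 2 (ℝ × ℝ) :=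
    fun T q => WithLp.toLp 2 (M T q.1 q.2.1, M T q.1 q.2.2) with hpr
  have hm1 : ∀ T, Measurable (fun q : A T × (B T × B T) => M T q.1 q.2.1) := fun T =>
    (hM T).comp (measurable_fst.prodMk (measurable_fst.comp measurable_snd))
  have hm2 : ∀ T, Measurable (fun q : A T × (B T × B T) => M T q.1 q.2.2) := fun T =>
    (hM T).comp (measurable_fst.prodMk (measurable_snd.comp measurable_snd))
  have hprm : ∀ T, Measurable (pr T) := fun T =>
    (MeasurableEquiv.toLp 2 (ℝ × ℝ)).measurable.comp ((hm1 T).prodMk (hm2 T))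
  set R : ∀ T, Measure (A T × (B T × B T)) := fun T => (m T).prod ((ρ T).prod (ρ T)) with hR
  set Q : ℕ → ProbabilityMeasure (WithLp 2 (ℝ × ℝ)) := fun T =>
    ⟨(R T).map (pr T), Measure.isProbabilityMeasure_map (hprm T).aemeasurable⟩ with hQ
  have hL : Measurable (WithLp.toLp 2 : ℝ × ℝ → WithLp 2 (ℝ × ℝ)) :=
    (MeasurableEquiv.toLp 2 (ℝ × ℝ)).measurable
  set Q₀ : ProbabilityMeasure (WithLp 2 (ℝ × ℝ)) :=
    ⟨(L.prod L).map (WithLp.toLp 2), Measure.isProbabilityMeasure_map hL.aemeasurable⟩ with hQ₀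
  have hconv : Tendsto Q atTop (nhds Q₀) := by
    refine ProbabilityMeasure.tendsto_of_tendsto_charFun fun t => ?_
    have e0 : charFun (Q₀ : Measure (WithLp 2 (ℝ × ℝ))) t
        = charFun L (WithLp.ofLp t).1 * charFun L (WithLp.ofLp t).2 := charFun_prod t
    rw [e0]
    refine (h _ _).congr fun T => ?_
    set s := (WithLp.ofLp t).1 with hs
    set s' := (WithLp.ofLp t).2 with hs'
    have e1 : charFun (Q T : Measure (WithLp 2 (ℝ × ℝ))) t
        = ∫ q, Complex.exp ((s * M T q.1 q.2.1 : ℝ) * Complex.I)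
          * Complex.exp ((s' * M T q.1 q.2.2 : ℝ) * Complex.I) ∂(R T) := by
      rw [charFun_apply]
      change ∫ x, _ ∂((R T).map (pr T)) = _
      rw [integral_map (hprm T).aemeasurable (by fun_prop)]
      congr 1; ext q
      rw [← Complex.exp_add, ← add_mul, WithLp.prod_inner_apply]
      simp only [hpr, RCLike.inner_apply, conj_trivial]
      push_cast
      rfl
    rw [e1, hR, integral_prod]
    · congr 1; ext y
      exact (integral_prod_mul (μ := ρ T) (ν := ρ T)
        (fun u => Complex.exp ((s * M T y u : ℝ) * Complex.I))
        (fun u => Complex.exp ((s' * M T y u : ℝ) * Complex.I))).symm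
    · have := hm1 T
      have := hm2 T
      refine Integrable.of_bound (C := 1) (Measurable.aestronglyMeasurable (by fun_prop))
        (ae_of_all _ fun q => ?_)
      rw [norm_mul, Complex.norm_exp_ofReal_mul_I, Complex.norm_exp_ofReal_mul_I, one_mul]
  set c : ℝ := ∫ x, f x ∂L with hc
  -- The test function `(f x - c) (f x' - c)` has mean zero in the limit.
  set F : BoundedContinuousFunction (WithLp 2 (ℝ × ℝ)) ℝ :=
    ((f - BoundedContinuousFunction.const ℝ c).compContinuous
        ⟨fun x => (WithLp.ofLp x).1, by fun_prop⟩)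
      * ((f - BoundedContinuousFunction.const ℝ c).compContinuous
        ⟨fun x => (WithLp.ofLp x).2, by fun_prop⟩) with hF
  have hFa : ∀ x, F x = (f (WithLp.ofLp x).1 - c) * (f (WithLp.ofLp x).2 - c) := fun x => rfl
  have hlim := ProbabilityMeasure.tendsto_iff_forall_integral_tendsto.1 hconv F
  have fL : Integrable (fun x => f x) L := f.integrable L
  have e0 : ∫ x, F x ∂(Q₀ : Measure (WithLp 2 (ℝ × ℝ))) = 0 := by
    change ∫ x, F x ∂((L.prod L).map (WithLp.toLp 2)) = 0
    rw [integral_map hL.aemeasurable F.continuous.aestronglyMeasurable]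
    simp only [hFa]
    rw [integral_prod_mul (μ := L) (ν := L) (fun x => f x - c) (fun x => f x - c),
      integral_sub fL (integrable_const _)]
    simp [hc]
  rw [e0] at hlim
  refine hlim.congr fun T => ?_
  change ∫ x, F x ∂((R T).map (pr T)) = _
  rw [integral_map (hprm T).aemeasurable F.continuous.aestronglyMeasurable]
  simp only [hFa, hpr]
  rw [hR, integral_prod]
  · congr 1; ext y
    rw [integral_prod_mul (μ := ρ T) (ν := ρ T) (fun u => f (M T y u) - c)
      (fun u => f (M T y u) - c), ← sq]
    congr 1
    have hMy : Measurable (M T y) := (hM T).comp measurable_prodMk_left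
    rw [integral_sub _ (integrable_const _)]
    · simp
    · exact Integrable.of_bound (C := ‖f‖)
        (f.continuous.measurable.comp hMy).aestronglyMeasurable
        (ae_of_all _ fun u => f.norm_coe_le_norm _)
  · have k1 := f.continuous.measurable.comp (hm1 T)
    have k2 := f.continuous.measurable.comp (hm2 T)
    refine Integrable.of_bound (C := (‖f‖ + |c|) * (‖f‖ + |c|))
      ((k1.sub_const c).mul (k2.sub_const c)).aestronglyMeasurable (ae_of_all _ fun q => ?_)
    have : ∀ x, ‖f x - c‖ ≤ ‖f‖ + |c| := fun x =>
      (norm_sub_le _ _).trans (add_le_add (f.norm_coe_le_norm x) le_rfl)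
    rw [norm_mul]
    exact mul_le_mul (this _) (this _) (norm_nonneg _) (by positivity)

/-! ### Independence across sites and conditional expectations -/

/-- Given all `y t`, the sites are independent, so the characteristic function of the total is the
product of the one-site characteristic functions. -/
lemma integral_exp_sites {𝓨 E : Type*} [MeasurableSpace E] (ν : Measure E)
    [IsProbabilityMeasure ν] (w : 𝓨 → E → ℝ) (T n : ℕ) (a b s : ℝ) (y : Fin T → 𝓨) :
    ∫ u, Complex.exp ((s * (a * (∑ t, Real.log ((n : ℝ)⁻¹ * ∑ i, w (y t) (u (t, i)))) + T * b)
        : ℝ) * Complex.I) ∂(Measure.pi fun _ : Fin T × Fin n => ν)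
      = ∏ t, sitePsi ν w n a b s (y t) := by
  have hcurry : (Measure.pi fun _ : Fin T × Fin n => ν).map (MeasurableEquiv.curry _ _ E)
      = Measure.pi fun _ : Fin T => Measure.pi fun _ : Fin n => ν := by
    have := Measure.infinitePi_map_curry (fun (_ : Fin T) (_ : Fin n) => ν)
    simpa only [Measure.infinitePi_eq_pi] using this
  unfold sitePsi
  rw [← integral_fintype_prod_eq_prod (fun t (u : Fin n → E) => Complex.exp
      ((s * (a * Real.log ((n : ℝ)⁻¹ * ∑ i, w (y t) (u i)) + b) : ℝ) * Complex.I)),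
    ← hcurry, integral_map_equiv]
  congr 1; ext u
  rw [← Complex.exp_sum, ← Finset.sum_mul, ← Complex.ofReal_sum, ← Finset.mul_sum,
    Finset.sum_add_distrib, ← Finset.mul_sum]
  simp [MeasurableEquiv.curry, Function.curry]

/-- If `(X, V) ∼ m ⊗ ρ`, then the conditional expectation of `F (X, V)` given `X` is obtained by
integrating out `V`. -/
lemma condExp_ae_eq_integral_of_prod {Ω A B : Type*} [mΩ : MeasurableSpace Ω]
    [mA : MeasurableSpace A] [MeasurableSpace B] (P : Measure Ω) [IsProbabilityMeasure P]
    (m : Measure A) [IsProbabilityMeasure m] (ρ : Measure B) [IsProbabilityMeasure ρ]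
    (X : Ω → A) (V : Ω → B) (hX : Measurable X) (hV : Measurable V)
    (hlaw : P.map (fun ω => (X ω, V ω)) = m.prod ρ) (F : A → B → ℝ)
    (hF : Measurable (Function.uncurry F)) (C : ℝ) (hC : ∀ x v, ‖F x v‖ ≤ C) :
    (fun ω => ∫ v, F (X ω) v ∂ρ) =ᵐ[P] P[fun ω => F (X ω) (V ω) | mA.comap X] := by
  have hXV : Measurable (fun ω => (X ω, V ω)) := hX.prodMk hV
  have hmapX : P.map X = m := by
    have : P.map X = (P.map (fun ω => (X ω, V ω))).map Prod.fst := by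
      rw [Measure.map_map measurable_fst hXV]; rfl
    rw [this, hlaw]
    exact Measure.fst_prod
  have hG : StronglyMeasurable (fun x => ∫ v, F x v ∂ρ) :=
    hF.stronglyMeasurable.integral_prod_right
  have hGb : ∀ x, ‖∫ v, F x v ∂ρ‖ ≤ C := fun x => by
    refine (norm_integral_le_of_norm_le_const (ae_of_all _ (hC x))).trans (le_of_eq ?_)
    simp
  have hFi : Integrable (Function.uncurry F) (m.prod ρ) :=
    Integrable.of_bound (C := C) hF.aestronglyMeasurable (ae_of_all _ fun q => hC q.1 q.2)
  refine ae_eq_condExp_of_forall_setIntegral_eq hX.comap_le ?_ ?_ ?_ ?_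
  · exact Integrable.of_bound (C := C) (hF.comp hXV).aestronglyMeasurable
      (ae_of_all _ fun ω => hC _ _)
  · intro s _ _
    exact (Integrable.of_bound (C := C) (hG.measurable.comp hX).aestronglyMeasurable
      (ae_of_all _ fun ω => hGb _)).integrableOn
  · rintro _ ⟨S, hS, rfl⟩ _
    have l1 : ∫ ω in X ⁻¹' S, (∫ v, F (X ω) v ∂ρ) ∂P = ∫ x in S, (∫ v, F x v ∂ρ) ∂m := by
      rw [← hmapX, setIntegral_map hS hG.aestronglyMeasurable hX.aemeasurable]
    have l2 : ∫ ω in X ⁻¹' S, F (X ω) (V ω) ∂P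
        = ∫ q in S ×ˢ Set.univ, Function.uncurry F q ∂(m.prod ρ) := by
      rw [← hlaw, setIntegral_map (hS.prod MeasurableSet.univ) hF.aestronglyMeasurable
        hXV.aemeasurable]
      congr 2
      ext ω; simp
    rw [l1, l2, setIntegral_prod _ hFi.integrableOn]
    simp
  · exact (hG.comp_measurable (comap_measurable X)).aestronglyMeasurable

/-! ### The conditional central limit theorem -/

/-- Theorem 1, part 1, of the paper.  In the importance-sampling random
effects setup — `Y₁, Y₂, …` i.i.d. with law `μ`; for each `T` an array
`U^T = (U^T_{t,i})_{t ≤ T, i ≤ N_T}` of i.i.d. standard Gaussian vectors of `ℝ^p`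
independent of the `Y`'s; `ϖ` a nonnegative normalized importance weight with
`E[ϖ(y, U)] = 1` for `μ`-a.e. `y`; `N_T = ⌈β T^α⌉` with `1/3 < α ≤ 1`, `β > 0`;
`Z_T = Σ_{t≤T} log(N_T⁻¹ Σ_i ϖ(Y_t, U^T_{t,i}))` the loglikelihood error;
`γ² = E[Var(ϖ(Y₁, U) | Y₁)]` — if `E[ϖ(Y₁,U₁₁)⁸] < ∞` then
`T^{(α−1)/2} Z_T + ½ T^{(1−α)/2} β⁻¹ γ² | 𝒴^T ⇒ N(0, β⁻¹γ²)`, i.e. for every bounded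
continuous `f` the conditional expectation of `f` of this quantity given
`𝒴^T = σ(Y₁,…,Y_T)` converges in probability to `∫ f dN(0, β⁻¹γ²)`. -/
theorem stmt0
    {Ω : Type*} [MeasurableSpace Ω] (P : Measure Ω) [IsProbabilityMeasure P]
    {𝓨 : Type*} [MeasurableSpace 𝓨] (μ : Measure 𝓨) [IsProbabilityMeasure μ]
    (p : ℕ) (α β : ℝ) (hα : 1 / 3 < α) (hα1 : α ≤ 1) (hβ : 0 < β)
    (N : ℕ → ℕ) (hN : ∀ T, N T = Nat.ceil (β * (T : ℝ) ^ α))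
    (Y : ℕ → Ω → 𝓨) (hYmeas : ∀ t, Measurable (Y t))
    (U : (T : ℕ) → Fin T → Fin (N T) → Ω → Fin p → ℝ)
    (hUmeas : ∀ T t i, Measurable (U T t i))
    (ϖ : 𝓨 → (Fin p → ℝ) → ℝ)
    (hϖmeas : Measurable (Function.uncurry ϖ))
    (hϖnonneg : ∀ y u, 0 ≤ ϖ y u)
    (hϖmean : ∀ᵐ y ∂μ, (∫ u, ϖ y u ∂(stdGaussianPi p)) = 1)
    (hlaw : ∀ T, Measure.map
        (fun ω => ((fun t : Fin T => Y ↑t ω),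
          fun ti : Fin T × Fin (N T) => U T ti.1 ti.2 ω)) P
      = (Measure.pi fun _ : Fin T => μ).prod
          (Measure.pi fun _ : Fin T × Fin (N T) => stdGaussianPi p))
    (hmom : Integrable (fun yu : 𝓨 × (Fin p → ℝ) => ϖ yu.1 yu.2 ^ 8)
      (μ.prod (stdGaussianPi p)))
    (gammaSq : ℝ)
    (hgammaSq : gammaSq
      = ∫ yu : 𝓨 × (Fin p → ℝ), (ϖ yu.1 yu.2 - 1) ^ 2 ∂(μ.prod (stdGaussianPi p)))
    (Z : ℕ → Ω → ℝ)
    (hZ : ∀ T ω, Z T ω = ∑ t : Fin T,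
      Real.log ((N T : ℝ)⁻¹ * ∑ i : Fin (N T), ϖ (Y ↑t ω) (U T t i ω)))
    (𝒴 : ℕ → MeasurableSpace Ω)
    (h𝒴 : ∀ T, 𝒴 T = ⨆ t : Fin T, MeasurableSpace.comap (Y ↑t) inferInstance) :
    ∀ f : BoundedContinuousFunction ℝ ℝ,
      TendstoInMeasure P
        (fun T => P[(fun ω => f ((T : ℝ) ^ ((α - 1) / 2) * Z T ω
            + 1 / 2 * (T : ℝ) ^ ((1 - α) / 2) * β⁻¹ * gammaSq)) | 𝒴 T])
        atTop
        (fun _ => ∫ x, f x ∂(gaussianReal 0 (Real.toNNReal (β⁻¹ * gammaSq)))) := by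
  intro f
  set ν := stdGaussianPi p with hν
  have : IsProbabilityMeasure ν := by rw [hν, stdGaussianPi]; infer_instance
  have hg : 0 ≤ gammaSq := by
    rw [hgammaSq]; exact integral_nonneg fun q => sq_nonneg _
  set a : ℕ → ℝ := fun T => (T : ℝ) ^ ((α - 1) / 2) with ha
  set b : ℕ → ℝ := fun T => 1 / 2 * (T : ℝ) ^ ((1 - α) / 2) * β⁻¹ * gammaSq / T with hb
  obtain ⟨hab, herr, hdrift, hvar⟩ := scaling_asymptotics hα hα1 hβ gammaSq hg N hN a b
    (fun _ => rfl) (fun _ => rfl)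
  set L : Measure ℝ := gaussianReal 0 (Real.toNNReal (β⁻¹ * gammaSq)) with hL
  set M : ∀ T, (Fin T → 𝓨) → (Fin T × Fin (N T) → Fin p → ℝ) → ℝ := fun T y u =>
    a T * (∑ t, Real.log ((N T : ℝ)⁻¹ * ∑ i, ϖ (y t) (u (t, i)))) + T * b T with hMdef
  have hM : ∀ T, Measurable (Function.uncurry (M T)) := fun T => by
    have : ∀ (t : Fin T) (i : Fin (N T)),
        Measurable (fun q : (Fin T → 𝓨) × (Fin T × Fin (N T) → Fin p → ℝ) =>
          ϖ (q.1 t) (q.2 (t, i))) := fun t i =>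
      hϖmeas.comp (f := fun q : (Fin T → 𝓨) × (Fin T × Fin (N T) → Fin p → ℝ) =>
        (q.1 t, q.2 (t, i))) (((measurable_pi_apply t).comp measurable_fst).prodMk
        ((measurable_pi_apply (t, i)).comp measurable_snd))
    simp only [hMdef, Function.uncurry_def]
    fun_prop
  have h2 := tendsto_two_copies (fun T => Measure.pi fun _ : Fin T => μ)
    (fun T => Measure.pi fun _ : Fin T × Fin (N T) => ν) M hM L (fun s s' => ?_) f
  swap
  · have e0 : charFun L s * charFun L s'
        = Complex.exp ((-(s ^ 2 + s' ^ 2) * (β⁻¹ * gammaSq) / 2 : ℝ) : ℂ) := by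
      rw [hL, charFun_gaussianReal, charFun_gaussianReal, ← Complex.exp_add]
      have : ((Real.toNNReal (β⁻¹ * gammaSq) : ℝ) : ℂ) = ((β⁻¹ * gammaSq : ℝ) : ℂ) := by
        rw [Real.coe_toNNReal _ (by positivity)]
      rw [this]
      congr 1; push_cast; ring
    rw [e0]
    refine (tendsto_pair_pow μ ν ϖ hϖmeas hϖmean hmom N a b gammaSq (β⁻¹ * gammaSq) hgammaSq hab
      herr hdrift hvar s s').congr fun T => ?_
    simp only [hMdef]
    simp_rw [integral_exp_sites ν ϖ T (N T) (a T) (b T), ← Finset.prod_mul_distrib]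
    rw [integral_fintype_prod_eq_pow (fun y => sitePsi ν ϖ (N T) (a T) (b T) s y
      * sitePsi ν ϖ (N T) (a T) (b T) s' y), Fintype.card_fin]
  set X : ∀ T, Ω → Fin T → 𝓨 := fun T ω t => Y t ω with hX
  set V : ∀ T, Ω → Fin T × Fin (N T) → Fin p → ℝ := fun T ω ti => U T ti.1 ti.2 ω with hV
  have hXm : ∀ T, Measurable (X T) := fun T => measurable_pi_lambda _ fun t => hYmeas t
  have hVm : ∀ T, Measurable (V T) := fun T => measurable_pi_lambda _ fun ti => hUmeas T _ _
  have h𝒴' : ∀ T, 𝒴 T = MeasurableSpace.comap (X T) inferInstance := fun T => by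
    rw [h𝒴, MeasurableSpace.pi, MeasurableSpace.comap_iSup]
    simp only [MeasurableSpace.comap_comp]
    rfl
  have hmapX : ∀ T, P.map (X T) = Measure.pi fun _ : Fin T => μ := fun T => by
    have : P.map (X T) = (P.map (fun ω => (X T ω, V T ω))).map Prod.fst := by
      rw [Measure.map_map measurable_fst ((hXm T).prodMk (hVm T))]; rfl
    rw [this, hlaw T]
    exact Measure.fst_prod
  set c : ℝ := ∫ x, f x ∂L with hc
  set G : ∀ T, (Fin T → 𝓨) → ℝ := fun T y =>
    ∫ u, f (M T y u) ∂(Measure.pi fun _ : Fin T × Fin (N T) => ν) with hG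
  have hGm : ∀ T, StronglyMeasurable (G T) := fun T =>
    StronglyMeasurable.integral_prod_right (f := fun y u => f (M T y u))
      (f.continuous.measurable.comp (hM T)).stronglyMeasurable
  have hcond : ∀ T, (fun ω => G T (X T ω)) =ᵐ[P] P[fun ω => f (M T (X T ω) (V T ω)) | 𝒴 T] :=
    fun T => by
      rw [h𝒴']
      exact condExp_ae_eq_integral_of_prod P _ _ (X T) (V T) (hXm T) (hVm T) (hlaw T)
        (fun y u => f (M T y u)) (f.continuous.measurable.comp (hM T)) ‖f‖
        (fun _ _ => f.norm_coe_le_norm _)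
  have hGX : TendstoInMeasure P (fun T ω => G T (X T ω)) atTop (fun _ => c) := by
    refine tendstoInMeasure_of_tendsto_eLpNorm (p := 2) two_ne_zero
      (fun T => ((hGm T).comp_measurable (hXm T)).aestronglyMeasurable)
      aestronglyMeasurable_const ?_
    have hb2 : ∀ T y, ‖G T y - c‖ ≤ ‖f‖ + |c| := fun T y => by
      refine (norm_sub_le _ _).trans (add_le_add ?_ le_rfl)
      refine (norm_integral_le_of_norm_le_const
        (ae_of_all _ fun u => f.norm_coe_le_norm _)).trans (le_of_eq ?_)
      simp
    have e : ∀ T, eLpNorm ((fun ω => G T (X T ω)) - fun _ => c) 2 P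
        = ENNReal.ofReal (√(∫ y, (G T y - c) ^ 2 ∂(Measure.pi fun _ : Fin T => μ))) := fun T => by
      have hmem : MemLp ((fun ω => G T (X T ω)) - fun _ => c) 2 P :=
        MemLp.of_bound (((hGm T).comp_measurable (hXm T)).sub
          stronglyMeasurable_const).aestronglyMeasurable (‖f‖ + |c|)
          (ae_of_all _ fun ω => hb2 _ _)
      rw [hmem.eLpNorm_eq_integral_rpow_norm two_ne_zero ENNReal.ofNat_ne_top, ← hmapX T,
        integral_map (hXm T).aemeasurable
          (((hGm T).measurable.sub_const c).pow_const 2).aestronglyMeasurable, Real.sqrt_eq_rpow]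
      simp
    simp_rw [e]
    have := (ENNReal.continuous_ofReal.comp Real.continuous_sqrt).tendsto 0 |>.comp h2
    simpa [Function.comp_def] using this
  -- `T * b T` is the recentring of the theorem only for `T ≠ 0`.
  refine hGX.congr' ?_ EventuallyEq.rfl
  filter_upwards [eventually_ge_atTop 1] with T hT
  refine (hcond T).trans (EventuallyEq.of_eq ?_)
  have hT0 : (T : ℝ) ≠ 0 := by positivity
  congr 1; ext ω
  simp only [hMdef, hZ, hX, hV, ha, hb]
  rw [mul_div_cancel₀ _ hT0]
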